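/- arXiv:1810.01255 — 2 statements merged into one kernel-verified Lean document; each statement's English description precedes it below -/
import Mathlib

section
/- Let C, C', C'' ∈ ℝ² with 0 < dist(C, C') ≤ 1 and 0 < dist(C, C'') ≤ 1, and suppose the undirected Euclidean angle ∠ C' C C'' is at least 2π/3. Let n ≥ 3 be an integer, let S ⊆ ℝ² be a finite set with at most n points, and set P = convexHull ℝ S. If P ⊆ closedBall(C, 1) and every point p ∈ P satisfies dist(p, C) ≤ dist(p, C') and dist(p, C) ≤ dist(p, C''), then volume(P) ≤ a*(n). -/
open Metric MeasureTheory Real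

noncomputable section

/-- The Euclidean plane. -/
abbrev Pt := EuclideanSpace ℝ (Fin 2)

/-- The set `M`: the closed unit disk truncated by two chords of length `√3` sharing the
endpoint `(0, −1)`. -/
def M : Set Pt :=
  {p | p 0 ^ 2 + p 1 ^ 2 ≤ 1 ∧ Real.sqrt 3 * p 0 - p 1 ≤ 1 ∧ -Real.sqrt 3 * p 0 - p 1 ≤ 1}

/-- `a*(n)`: the supremum of the areas of convex polygons with at most `n` vertices inscribed
in `M`. -/
def astar (n : ℕ) : ℝ :=
  sSup {a : ℝ | ∃ S : Finset Pt, (S : Set Pt) ⊆ M ∧ S.card ≤ n ∧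
    a = (volume (convexHull ℝ (S : Set Pt))).toReal}


/-- The linear map of the plane with matrix `(a b; c d)`. -/
def lin2 (a b c d : ℝ) : Pt →ₗ[ℝ] Pt :=
  Matrix.toEuclideanLin !![a, b; c, d]

lemma lin2_zero (a b c d : ℝ) (p : Pt) : lin2 a b c d p 0 = a * p 0 + b * p 1 := by
  simp [lin2, Matrix.toEuclideanLin, Matrix.mulVec, dotProduct, Fin.sum_univ_two]

lemma lin2_one (a b c d : ℝ) (p : Pt) : lin2 a b c d p 1 = c * p 0 + d * p 1 := by
  simp [lin2, Matrix.toEuclideanLin, Matrix.mulVec, dotProduct, Fin.sum_univ_two]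

lemma lin2_det (a b c d : ℝ) : LinearMap.det (lin2 a b c d) = a * d - b * c := by
  have : lin2 a b c d = Matrix.toLin (EuclideanSpace.basisFun (Fin 2) ℝ).toBasis
      (EuclideanSpace.basisFun (Fin 2) ℝ).toBasis !![a, b; c, d] := by
    rw [lin2, Matrix.toEuclideanLin_eq_toLin_orthonormal]
  rw [this, LinearMap.det_toLin, Matrix.det_fin_two_of]

lemma vol_lin2 (a b c d : ℝ) (h : |a * d - b * c| = 1) (s : Set Pt) :
    volume (lin2 a b c d '' s) = volume s := by
  rw [Measure.addHaar_image_linearMap, lin2_det, h]; simp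

lemma pt_ext {p q : Pt} (h0 : p 0 = q 0) (h1 : p 1 = q 1) : p = q := by
  ext i; fin_cases i
  · exact h0
  · exact h1

/-- closed half-planes are convex -/
lemma convex_half (A B D : ℝ) : Convex ℝ {p : Pt | A * p 0 + B * p 1 ≤ D} := by
  intro p hp q hq a b ha hb hab
  simp only [Set.mem_ofPred_eq, PiLp.add_apply, PiLp.smul_apply, smul_eq_mul] at *
  have h1 := mul_le_mul_of_nonneg_left hp ha
  have h2 := mul_le_mul_of_nonneg_left hq hb
  have h3 : D = a * D + b * D := by rw [← add_mul, hab, one_mul]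
  linarith

lemma hull_half (A B D : ℝ) (S : Set Pt) (h : ∀ p ∈ S, A * p 0 + B * p 1 ≤ D) :
    ∀ p ∈ convexHull ℝ S, A * p 0 + B * p 1 ≤ D := fun _ hp =>
  convexHull_min (show S ⊆ {p : Pt | A * p 0 + B * p 1 ≤ D} from h) (convex_half A B D) hp

lemma meas_half (A B D : ℝ) : MeasurableSet {p : Pt | A * p 0 + B * p 1 ≤ D} := by
  apply IsClosed.measurableSet
  apply isClosed_le <;> fun_prop

lemma meas_hull (S : Finset Pt) : MeasurableSet (convexHull ℝ (S : Set Pt)) :=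
  (S.finite_toSet.isClosed_convexHull ℝ).measurableSet

/-- signed doubled area of the triangle `p l r` -/
def crs (l r p : Pt) : ℝ := (l 0 - p 0) * (r 1 - p 1) - (l 1 - p 1) * (r 0 - p 0)

lemma vol_tri (x l r : Pt) : volume (convexHull ℝ {x, l, r}) =
    ENNReal.ofReal |crs l r x| * volume (convexHull ℝ {(0 : Pt), !₂[1, 0], !₂[0, 1]}) := by
  have h1 : (convexHull ℝ {x, l, r} : Set Pt) = (fun z => x + z) '' (lin2 (l 0 - x 0) (r 0 - x 0) (l 1 - x 1) (r 1 - x 1) ''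
      (convexHull ℝ {(0 : Pt), !₂[1, 0], !₂[0, 1]})) := by
    rw [LinearMap.image_convexHull]
    have := AffineMap.image_convexHull (𝕜 := ℝ) ((AffineEquiv.constVAdd ℝ Pt x).toAffineMap) 
      (lin2 (l 0 - x 0) (r 0 - x 0) (l 1 - x 1) (r 1 - x 1) '' {(0 : Pt), !₂[1, 0], !₂[0, 1]})
    have e : ((AffineEquiv.constVAdd ℝ Pt x).toAffineMap : Pt → Pt) = fun z => x + z := by
      ext z; simp
    rw [e] at this
    rw [this]
    congr 1
    simp only [Set.image_insert_eq, Set.image_singleton]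
    congr 1
    · simp
    · congr 1
      · apply pt_ext <;> simp [lin2_zero, lin2_one]
      · congr 1
        apply pt_ext <;> simp [lin2_zero, lin2_one]
  rw [h1, Set.image_add_left, measure_preimage_add, Measure.addHaar_image_linearMap, lin2_det]
  congr 3
  unfold crs; congr 1; ring

lemma vol_line (A B D : ℝ) (h : A ≠ 0 ∨ B ≠ 0) : volume {p : Pt | A * p 0 + B * p 1 = D} = 0 := by
  let W : AffineSubspace ℝ Pt :=
    { carrier := {p : Pt | A * p 0 + B * p 1 = D}
      smul_vsub_vadd_mem' := by
        intro c p q r hp hq hr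
        simp only [Set.mem_ofPred_eq, vsub_eq_sub, vadd_eq_add, PiLp.add_apply, PiLp.smul_apply,
          PiLp.sub_apply, smul_eq_mul] at *
        linear_combination c * hp - c * hq + hr }
  have : W ≠ ⊤ := by
    intro hW
    have hh : ∀ p : Pt, A * p 0 + B * p 1 = D := fun p => by
      have : p ∈ W := by rw [hW]; trivial
      exact this
    have e0 := hh 0
    have e1 := hh !₂[1, 0]
    have e2 := hh !₂[0, 1]
    simp at e0 e1 e2
    rcases h with h | h <;> apply h <;> linarith
  exact Measure.addHaar_affineSubspace volume W this

/-- Key replacement lemma. -/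
lemma key_replace (S : Finset Pt) (x : Pt) : ∃ A B : ℝ, ∀ y : Pt,
    A * x 0 + B * x 1 ≤ A * y 0 + B * y 1 →
    volume (convexHull ℝ (insert x (S : Set Pt))) ≤ volume (convexHull ℝ (insert y (S : Set Pt))) := by
  classical
  by_cases hx : x ∈ convexHull ℝ (S : Set Pt)
  · refine ⟨0, 0, fun y _ => measure_mono ?_⟩
    refine convexHull_min ?_ (convex_convexHull ℝ _)
    rintro p (rfl | hp)
    · exact convexHull_mono (Set.subset_insert _ _) hx
    · exact subset_convexHull ℝ _ (Set.mem_insert_of_mem _ hp)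
  rcases S.eq_empty_or_nonempty with rfl | hne
  · exact ⟨0, 0, fun y _ => by simp⟩
  obtain ⟨f, c, hfx, hfS⟩ := geometric_hahn_banach_point_closed (convex_convexHull ℝ _)
    (S.finite_toSet.isClosed_convexHull ℝ) hx
  have hf : ∀ p : Pt, f p = f !₂[1, 0] * p 0 + f !₂[0, 1] * p 1 := by
    intro p
    have : p = p 0 • !₂[(1 : ℝ), 0] + p 1 • !₂[(0 : ℝ), 1] := by
      apply pt_ext <;> simp
    conv_lhs => rw [this]
    rw [map_add, map_smul, map_smul]; simp; ring
  set a := f !₂[1, 0]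
  set b := f !₂[0, 1]
  have hpos : ∀ q ∈ S, 0 < a * (q 0 - x 0) + b * (q 1 - x 1) := by
    intro q hq
    have := hfS q (subset_convexHull ℝ _ hq)
    rw [hf] at this hfx
    linarith
  have hab : 0 < a ^ 2 + b ^ 2 := by
    obtain ⟨q, hq⟩ := hne
    have := hpos q hq
    by_contra hcon
    have ha : a = 0 := by nlinarith [sq_nonneg a, sq_nonneg b]
    have hb : b = 0 := by nlinarith [sq_nonneg a, sq_nonneg b]
    rw [ha, hb] at this; simp at this
  let ρ : Pt → ℝ := fun q => (a * (q 1 - x 1) - b * (q 0 - x 0)) / (a * (q 0 - x 0) + b * (q 1 - x 1))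
  have hρ : ∀ p ∈ S, ∀ q ∈ S, ρ p ≤ ρ q → 0 ≤ crs p q x := by
    intro p hp q hq h
    rw [div_le_div_iff₀ (hpos p hp) (hpos q hq)] at h
    have : 0 ≤ (a ^ 2 + b ^ 2) * crs p q x := by unfold crs; nlinarith
    exact nonneg_of_mul_nonneg_right this hab
  obtain ⟨l, hl, hlmin⟩ := S.exists_min_image ρ hne
  obtain ⟨r, hr, hrmax⟩ := S.exists_max_image ρ hne
  have hlq : ∀ p ∈ convexHull ℝ (insert x (S : Set Pt)), 0 ≤ crs l p x := by
    intro p hp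
    have := hull_half (l 1 - x 1) (-(l 0 - x 0)) ((l 1 - x 1) * x 0 - (l 0 - x 0) * x 1) _ (by
      rintro q (rfl | hq)
      · linarith
      · have := hρ l hl q hq (hlmin q hq)
        unfold crs at this; linarith) p hp
    unfold crs; linarith
  have hrq : ∀ p ∈ convexHull ℝ (insert x (S : Set Pt)), 0 ≤ crs p r x := by
    intro p hp
    have := hull_half (-(r 1 - x 1)) ((r 0 - x 0)) (-(r 1 - x 1) * x 0 + (r 0 - x 0) * x 1) _ (by
      rintro q (rfl | hq)
      · linarith
      · have := hρ q hq r hr (hrmax q hq)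
        unfold crs at this; linarith) p hp
    unfold crs; linarith
  have hlS : l ∈ convexHull ℝ (S : Set Pt) := subset_convexHull ℝ _ hl
  have hrS : r ∈ convexHull ℝ (S : Set Pt) := subset_convexHull ℝ _ hr
  rcases (hρ l hl r hr (hlmin r hr)).eq_or_lt with hC | hC
  · -- degenerate
    refine ⟨0, 0, fun y _ => ?_⟩
    have hz : volume (convexHull ℝ (insert x (S : Set Pt))) = 0 := by
      refine measure_mono_null ?_ (vol_line (l 1 - x 1) (-(l 0 - x 0)) ((l 1 - x 1) * x 0 - (l 0 - x 0) * x 1) ?_)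
      · intro p hp
        have h1 := hlq p hp
        have h2 := hrq p hp
        have h3 := hpos l hl
        have h4 := hpos r hr
        simp only [Set.mem_ofPred_eq]
        unfold crs at *
        have h5 : (a * (r 0 - x 0) + b * (r 1 - x 1)) * ((l 0 - x 0) * (p 1 - x 1) - (l 1 - x 1) * (p 0 - x 0))
          = - ((a * (l 0 - x 0) + b * (l 1 - x 1)) * ((p 0 - x 0) * (r 1 - x 1) - (p 1 - x 1) * (r 0 - x 0))) := by
          linear_combination (a * (p 0 - x 0) + b * (p 1 - x 1)) * (-hC)
        have h6 : (l 0 - x 0) * (p 1 - x 1) - (l 1 - x 1) * (p 0 - x 0) ≤ 0 := by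
          by_contra hcon
          push Not at hcon
          have := mul_pos h4 hcon
          have := mul_nonneg h3.le h2
          linarith
        linarith
      · by_contra hcon
        push Not at hcon
        have := hpos l hl
        have e1 : l 0 - x 0 = 0 := by linarith [hcon.2]
        rw [e1, hcon.1] at this; simp at this
    rw [hz]; exact zero_le
  · refine ⟨l 1 - r 1, r 0 - l 0, fun y hy => ?_⟩
    have hCy : crs l r x ≤ crs l r y := by unfold crs; linarith
    set H : Set Pt := {p : Pt | (-(l 1 - r 1)) * p 0 + (-(r 0 - l 0)) * p 1 ≤ l 0 * r 1 - l 1 * r 0} with hH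
    have hHm : ∀ p, p ∈ H ↔ 0 ≤ crs l r p := by
      intro p; simp only [hH, Set.mem_ofPred_eq]; unfold crs
      constructor <;> intro h <;> linarith
    have hHmeas : MeasurableSet H := meas_half _ _ _
    have hsub : convexHull ℝ (insert x (S : Set Pt)) ⊆ (convexHull ℝ (S : Set Pt) \ H) ∪ convexHull ℝ {x, l, r} := by
      intro p hp
      have hp1 := hlq p hp
      have hp2 := hrq p hp
      have hpe0 : p 0 = x 0 + crs p r x / crs l r x * (l 0 - x 0) + crs l p x / crs l r x * (r 0 - x 0) := by
        field_simp; unfold crs; ring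
      have hpe1 : p 1 = x 1 + crs p r x / crs l r x * (l 1 - x 1) + crs l p x / crs l r x * (r 1 - x 1) := by
        field_simp; unfold crs; ring
      have hα : 0 ≤ crs p r x / crs l r x := by positivity
      have hβ : 0 ≤ crs l p x / crs l r x := by positivity
      set α := crs p r x / crs l r x
      set β := crs l p x / crs l r x
      have hcp : crs l r p = crs l r x * (1 - α - β) := by
        unfold crs; rw [hpe0, hpe1]; ring
      by_cases hpH : p ∈ H
      · right
        rw [hHm, hcp] at hpH
        have h1 : 0 ≤ 1 - α - β := nonneg_of_mul_nonneg_right hpH hC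
        have hxm : x ∈ convexHull ℝ {x, l, r} := subset_convexHull ℝ _ (by simp)
        have hlm : l ∈ convexHull ℝ {x, l, r} := subset_convexHull ℝ _ (by simp)
        have hrm : r ∈ convexHull ℝ {x, l, r} := subset_convexHull ℝ _ (by simp)
        have h2 := (convex_convexHull ℝ ({x, l, r} : Set Pt)).sum_mem (t := Finset.univ) (w := ![1 - α - β, α, β])
          (z := ![x, l, r]) (by intro i _; fin_cases i <;> simp <;> linarith) (by simp [Fin.sum_univ_three]; ring)
          (by intro i _; fin_cases i <;> simpa)
        convert h2 using 1
        apply pt_ext <;> simp [Fin.sum_univ_three]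
        · linarith
        · linarith
      · left
        refine ⟨?_, hpH⟩
        rw [hHm, hcp] at hpH
        have h1 : 1 < α + β := by
          by_contra hcon
          exact hpH (mul_nonneg hC.le (by linarith))
        rw [convexHull_insert hne, mem_convexJoin] at hp
        obtain ⟨x', hx', q, hq, hseg⟩ := hp
        rw [Set.mem_singleton_iff] at hx'
        subst hx'
        obtain ⟨t', t, ht', ht, htt, hpt⟩ := hseg
        have hγ : 0 < α + β := by linarith
        have hz0 : (α / (α + β)) • l + (β / (α + β)) • r ∈ convexHull ℝ (S : Set Pt) := by
          apply convex_convexHull ℝ _ hlS hrS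
          · positivity
          · positivity
          · field_simp
        rcases eq_or_lt_of_le (show t ≤ 1 by linarith) with ht1 | ht1
        · have : t' = 0 := by linarith
          rw [this, ht1] at hpt
          simp at hpt; rwa [← hpt]
        · have htp : 0 < t := by
            rcases ht.eq_or_lt with h | h
            · exfalso
              have : t' = 1 := by linarith
              rw [this, ← h] at hpt
              simp at hpt
              have h7 : crs l r p = crs l r x' := by rw [hpt]
              rw [hcp] at h7
              nlinarith
            · exact h
          have hden : 0 < (α + β) - t := by linarith
          have h8 := convex_convexHull ℝ _ hz0 hq (a := (α + β) * (1 - t) / ((α + β) - t))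
            (b := t * ((α + β) - 1) / ((α + β) - t)) 
            (by apply div_nonneg (mul_nonneg hγ.le (by linarith)) hden.le)
            (by apply div_nonneg (mul_nonneg ht (by linarith)) hden.le) (by field_simp; ring)
          have ht'' : t' = 1 - t := by linarith
          have e0 : p 0 = (1 - t) * x' 0 + t * q 0 := by rw [← hpt, ht'']; simp
          have e1 : p 1 = (1 - t) * x' 1 + t * q 1 := by rw [← hpt, ht'']; simp
          convert h8 using 1
          apply pt_ext
          · simp only [PiLp.add_apply, PiLp.smul_apply, smul_eq_mul]
            have : (α + β) * (1 - t) / (α + β - t) * (α / (α + β) * l 0 + β / (α + β) * r 0)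
               = (1 - t) / (α + β - t) * (p 0 - x' 0 + (α + β) * x' 0) := by
              rw [hpe0]; field_simp; ring
            rw [this]
            field_simp
            linear_combination (α + β - 1) * e0
          · simp only [PiLp.add_apply, PiLp.smul_apply, smul_eq_mul]
            have : (α + β) * (1 - t) / (α + β - t) * (α / (α + β) * l 1 + β / (α + β) * r 1)
               = (1 - t) / (α + β - t) * (p 1 - x' 1 + (α + β) * x' 1) := by
              rw [hpe1]; field_simp; ring
            rw [this]
            field_simp
            linear_combination (α + β - 1) * e1
    have hsup : (convexHull ℝ (S : Set Pt) \ H) ∪ convexHull ℝ {y, l, r} ⊆ convexHull ℝ (insert y (S : Set Pt)) := by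
      apply Set.union_subset
      · exact Set.sdiff_subset.trans (convexHull_mono (Set.subset_insert _ _))
      · apply convexHull_mono
        rintro p (rfl | rfl | rfl)
        · simp
        · exact Set.mem_insert_of_mem _ hl
        · exact Set.mem_insert_of_mem _ hr
    have hdis : Disjoint (convexHull ℝ (S : Set Pt) \ H) (convexHull ℝ {y, l, r}) := by
      rw [Set.disjoint_left]
      intro p hp hp2
      apply hp.2
      refine convexHull_min ?_ (convex_half _ _ _) hp2
      rintro q (rfl | rfl | rfl)
      · exact (hHm _).2 (hC.le.trans hCy)
      · refine (hHm _).2 ?_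
        unfold crs; simp
      · refine (hHm _).2 ?_
        unfold crs; simp
    have hmt : MeasurableSet (convexHull ℝ {y, l, r} : Set Pt) := by
      have := meas_hull {y, l, r}
      simpa using this
    calc _ ≤ _ := measure_mono hsub
      _ ≤ volume (convexHull ℝ (S : Set Pt) \ H) + volume (convexHull ℝ {x, l, r}) := measure_union_le _ _
      _ ≤ volume (convexHull ℝ (S : Set Pt) \ H) + volume (convexHull ℝ {y, l, r}) := by
        refine add_le_add le_rfl ?_
        rw [vol_tri x l r, vol_tri y l r]
        refine mul_le_mul' ?_ le_rfl
        apply ENNReal.ofReal_le_ofReal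
        rw [abs_of_pos hC, abs_of_pos (hC.trans_le hCy)]; exact hCy
      _ = _ := (measure_union hdis hmt).symm
      _ ≤ _ := measure_mono hsup


lemma replace_all (E : Set Pt) (A : Finset Pt) : ∀ B : Finset Pt, (B : Set Pt) ⊆ E →
    (A : Set Pt) ⊆ convexHull ℝ E → ∃ T : Finset Pt, (T : Set Pt) ⊆ E ∧ T.card ≤ A.card + B.card ∧
      volume (convexHull ℝ ((A : Set Pt) ∪ (B : Set Pt))) ≤ volume (convexHull ℝ (T : Set Pt)) := by
  classical
  induction A using Finset.induction_on with
  | empty => 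
    intro B hB _
    exact ⟨B, hB, by simp, by simp⟩
  | insert x A hxA ih =>
    intro B hB hA
    rw [Finset.coe_insert, Set.insert_subset_iff] at hA
    obtain ⟨α, β, hk⟩ := key_replace (A ∪ B) x
    have hy : ∃ y ∈ E, α * x 0 + β * x 1 ≤ α * y 0 + β * y 1 := by
      by_contra hcon
      push Not at hcon
      have : E ⊆ {p : Pt | α * p 0 + β * p 1 < α * x 0 + β * x 1} := hcon
      have h2 := convexHull_min this (by
        intro p hp q hq a b ha hb hab
        simp only [Set.mem_ofPred_eq, PiLp.add_apply, PiLp.smul_apply, smul_eq_mul] at *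
        have h3 : α * x 0 + β * x 1 = a * (α * x 0 + β * x 1) + b * (α * x 0 + β * x 1) := by
          rw [← add_mul, hab, one_mul]
        rcases ha.eq_or_lt with h | h
        · have : b = 1 := by linarith
          rw [← h, this]; linarith
        · have := mul_lt_mul_of_pos_left hp h
          have := mul_le_mul_of_nonneg_left hq.le hb
          linarith) hA.1
      simp at h2
    obtain ⟨y, hyE, hy⟩ := hy
    obtain ⟨T, hT, hTc, hTv⟩ := ih (insert y B) (by
      rw [Finset.coe_insert, Set.insert_subset_iff]; exact ⟨hyE, hB⟩) hA.2
    refine ⟨T, hT, ?_, ?_⟩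
    · have := Finset.card_insert_le y B
      rw [Finset.card_insert_of_notMem hxA]; omega
    · refine le_trans ?_ hTv
      have := hk y hy
      rw [Finset.coe_union] at this
      rw [Finset.coe_insert, Finset.coe_insert, Set.insert_union, Set.union_insert]
      exact this

/-- the truncated circle -/
def EE (s k : ℝ) : Set Pt := {p | p 0 ^ 2 + p 1 ^ 2 = 1 ∧ s * p 0 - k * p 1 ≤ 1 / 2 ∧ - s * p 0 - k * p 1 ≤ 1 / 2}

lemma mem_hull_EE (s k : ℝ) (hk : 0 ≤ k) (hk2 : k ≤ 1 / 2) (x : Pt) (hx : x 0 ^ 2 + x 1 ^ 2 ≤ 1)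
    (h1 : s * x 0 - k * x 1 ≤ 1 / 2) (h2 : - s * x 0 - k * x 1 ≤ 1 / 2) :
    x ∈ convexHull ℝ (EE s k) := by
  rcases hx.eq_or_lt with hx | hx
  · exact subset_convexHull ℝ _ ⟨hx, h1, h2⟩
  let Z : ℝ → Pt := fun t => x + t • !₂[2 * k * x 0, 2 * k * x 1 + 1]
  have z0 : ∀ t, Z t 0 = x 0 + t * (2 * k * x 0) := fun t => by simp [Z]
  have z1 : ∀ t, Z t 1 = x 1 + t * (2 * k * x 1 + 1) := fun t => by simp [Z]
  have hx1 : -1 < x 1 := by nlinarith [sq_nonneg (x 0)]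
  have hw : 0 < 2 * k * x 1 + 1 := by
    rcases hk.eq_or_lt with h | h
    · rw [← h]; norm_num
    · have := mul_pos h (show 0 < x 1 + 1 by linarith)
      linarith
  let q : ℝ → ℝ := fun t => (x 0 + t * (2 * k * x 0)) ^ 2 + (x 1 + t * (2 * k * x 1 + 1)) ^ 2
  have hqc : Continuous q := by fun_prop
  have hq0 : q 0 ≤ 1 := by simp [q]; exact hx.le
  have mem : ∀ t, q t = 1 → 0 ≤ 1 + t * (2 * k) → Z t ∈ EE s k := by
    intro t hq ht
    refine ⟨by rw [z0, z1]; exact hq, ?_, ?_⟩ <;> rw [z0, z1]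
    · nlinarith [mul_nonneg ht (sub_nonneg.2 h1)]
    · nlinarith [mul_nonneg ht (sub_nonneg.2 h2)]
  obtain ⟨t2, ⟨ht2, -⟩, hq2⟩ : ∃ t ∈ Set.Icc 0 (2 / (2 * k * x 1 + 1)), q t = 1 := by
    refine intermediate_value_Icc (by positivity) hqc.continuousOn ⟨hq0, ?_⟩
    simp only [q]
    rw [div_mul_cancel₀ _ hw.ne']
    nlinarith [sq_nonneg (x 0 + 2 / (2 * k * x 1 + 1) * (2 * k * x 0))]
  obtain ⟨t1, ht1, hc1, hq1⟩ : ∃ t ≤ (0 : ℝ), 0 ≤ 1 + t * (2 * k) ∧ q t = 1 := by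
    rcases hk.eq_or_lt with h | h
    · obtain ⟨t, ⟨_, ht⟩, hq⟩ : ∃ t ∈ Set.Icc (-2 : ℝ) 0, q t = 1 := by
        refine intermediate_value_Icc' (by norm_num) hqc.continuousOn ⟨hq0, ?_⟩
        simp only [q, ← h]
        nlinarith [sq_nonneg (x 0)]
      exact ⟨t, ht, by rw [← h]; simp, hq⟩
    · have hp : (0 : ℝ) < 2 * k := by linarith
      obtain ⟨t, ⟨ht', ht⟩, hq⟩ : ∃ t ∈ Set.Icc (-(1 / (2 * k)) : ℝ) 0, q t = 1 := by
        refine intermediate_value_Icc' (by rw [neg_nonpos]; positivity) hqc.continuousOn ⟨hq0, ?_⟩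
        have e : q (-(1 / (2 * k))) = (1 / (2 * k)) ^ 2 := by
          simp only [q]; field_simp; ring
        rw [e]
        have : 1 ≤ 1 / (2 * k) := by rw [le_div_iff₀ hp]; linarith
        nlinarith
      refine ⟨t, ht, ?_, hq⟩
      have : -(1 / (2 * k)) * (2 * k) = -1 := by field_simp
      nlinarith
  have m1 := subset_convexHull ℝ _ (mem t1 hq1 hc1)
  have m2 := subset_convexHull ℝ _ (mem t2 hq2 (by positivity))
  rcases ht2.eq_or_lt with h | h
  · have : Z t2 = x := by simp [Z, ← h]
    rwa [this] at m2
  have hd : 0 < t2 - t1 := by linarith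
  have := convex_convexHull ℝ _ m1 m2 (a := t2 / (t2 - t1)) (b := - t1 / (t2 - t1)) (by positivity)
    (div_nonneg (by linarith) hd.le) (by field_simp; ring)
  convert this using 1
  apply pt_ext
  · simp only [PiLp.add_apply, PiLp.smul_apply, smul_eq_mul, z0]; field_simp; ring
  · simp only [PiLp.add_apply, PiLp.smul_apply, smul_eq_mul, z1]; field_simp; ring

lemma bot_aux {s k x y : ℝ} (hs0 : 0 ≤ s) (hs : 3 / 4 ≤ s ^ 2) (hk : 0 ≤ k) (hx : 0 ≤ x) (hy : 0 ≤ y) 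
    (hxy : x ^ 2 + y ^ 2 = 1) (h : s * x + k * y ≤ 1 / 2) : x ^ 2 ≤ 1 / 3 := by
  have h1 : s * x ≤ 1 / 2 := by nlinarith [mul_nonneg hk hy]
  have h2 : (s * x) ^ 2 ≤ 1 / 4 := by nlinarith [mul_nonneg hs0 hx]
  nlinarith [sq_nonneg x]

lemma top_aux {s k X Y : ℝ} (hs0 : 0 ≤ s) (hsk : s ^ 2 + k ^ 2 = 1) (hk : 0 ≤ k) (hk2 : k ≤ 1 / 2)
    (hX : 0 ≤ X) (hY : 0 ≤ Y) (hXY : X ^ 2 + Y ^ 2 = 1) (h : s * X - k * Y ≤ 1 / 2) : 1 / 2 ≤ Y := by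
  by_contra hcon
  push Not at hcon
  have h2 : (s * X) ^ 2 ≤ (1 / 2 + k * Y) ^ 2 :=
    pow_le_pow_left₀ (mul_nonneg hs0 hX) (by linarith) 2
  have h3 : (s * X) ^ 2 = (1 - k ^ 2) * (1 - Y ^ 2) := by
    rw [mul_pow]; rw [show s ^ 2 = 1 - k ^ 2 by linarith, show X ^ 2 = 1 - Y ^ 2 by linarith]
  have h4 : k ^ 2 ≤ 1 / 4 := by nlinarith
  have h5 : Y ^ 2 < 1 / 4 := by nlinarith
  have h6 : k * Y ≤ 1 / 4 := by nlinarith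
  nlinarith

lemma dot_aux {s k x y X Y : ℝ} (hs0 : 0 ≤ s) (hs : 3 / 4 ≤ s ^ 2) (hsk : s ^ 2 + k ^ 2 = 1) (hk : 0 ≤ k)
    (hx : 0 ≤ x) (hy : 0 ≤ y) (hxy : x ^ 2 + y ^ 2 = 1) (h : s * x + k * y ≤ 1 / 2) 
    (hX : 0 ≤ X) (hY : 0 ≤ Y) (hXY : X ^ 2 + Y ^ 2 = 1) (h' : s * X - k * Y ≤ 1 / 2) :
    1 / 2 ≤ y * Y - x * X := by
  have hk2 : k ≤ 1 / 2 := by nlinarith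
  have hx3 := bot_aux hs0 hs hk hx hy hxy h
  have hyx : x ≤ y := abs_le_of_sq_le_sq' (by linarith) hy |>.2
  have hsk' : k ≤ s := abs_le_of_sq_le_sq' (by nlinarith) hs0 |>.2
  have hY1 : Y ≤ 1 := by nlinarith
  obtain ⟨c1, hc1⟩ : ∃ c, c = s * x + k * y := ⟨_, rfl⟩
  obtain ⟨s1, hs1⟩ : ∃ c, c = s * y - k * x := ⟨_, rfl⟩
  obtain ⟨c2, hc2⟩ : ∃ c, c = k * Y - s * X := ⟨_, rfl⟩
  obtain ⟨s2, hs2⟩ : ∃ c, c = s * Y + k * X := ⟨_, rfl⟩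
  have e1 : c1 ^ 2 + s1 ^ 2 = 1 := by
    rw [hc1, hs1]; linear_combination (x ^ 2 + y ^ 2) * hsk + hxy
  have e2 : c2 ^ 2 + s2 ^ 2 = 1 := by
    rw [hc2, hs2]; linear_combination (X ^ 2 + Y ^ 2) * hsk + hXY
  have e3 : y * Y - x * X = c1 * c2 + s1 * s2 := by
    rw [hc1, hs1, hc2, hs2]; linear_combination -(y * Y - x * X) * hsk
  have c1n : 0 ≤ c1 := by rw [hc1]; positivity
  have s1n : 0 ≤ s1 := by rw [hs1]; linarith [mul_le_mul hsk' hyx hx hs0]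
  have s2n : 0 ≤ s2 := by rw [hs2]; positivity
  have c1l : c1 ≤ 1 / 2 := by linarith
  have c2l : -(1 / 2) ≤ c2 := by linarith
  have c2u : c2 ≤ 1 / 2 := by 
    have h1 : k * Y ≤ 1 / 2 * 1 := mul_le_mul hk2 hY1 hY (by norm_num)
    have h2 := mul_nonneg hs0 hX
    rw [hc2]; linarith
  have s1q : 3 / 4 ≤ s1 ^ 2 := by
    have : c1 ^ 2 ≤ (1 / 2) ^ 2 := sq_le_sq' (by linarith) c1l
    linarith
  have s2q : 3 / 4 ≤ s2 ^ 2 := by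
    have : c2 ^ 2 ≤ (1 / 2) ^ 2 := sq_le_sq' c2l c2u
    linarith
  have hss : 3 / 4 ≤ s1 * s2 := by
    apply abs_le_of_sq_le_sq' _ (by positivity) |>.2
    have := mul_le_mul s1q s2q (by norm_num) (by positivity)
    rw [mul_pow]; linarith
  have hcc : -(1 / 4) ≤ c1 * c2 := by
    have := mul_le_mul_of_nonneg_left c2l c1n
    linarith
  linarith

/-- Fitting circle points into a rotated copy of `M`. -/
lemma fit_M (T : Finset Pt) (a : Pt) (ha : a 0 ^ 2 + a 1 ^ 2 = 1)
    (hT : ∀ p ∈ T, p 0 ^ 2 + p 1 ^ 2 = 1) (hT2 : ∀ p ∈ T, p = a ∨ p 0 * a 0 + p 1 * a 1 ≤ -(1 / 2)) :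
    ∃ T' : Finset Pt, (T' : Set Pt) ⊆ M ∧ T'.card ≤ T.card ∧
      volume (convexHull ℝ (T : Set Pt)) ≤ volume (convexHull ℝ (T' : Set Pt)) := by
  classical
  refine ⟨T.image (lin2 (-a 1) (a 0) (-a 0) (-a 1)), ?_, Finset.card_image_le, ?_⟩
  · intro q hq
    rw [Finset.coe_image] at hq
    obtain ⟨p, hp, rfl⟩ := hq
    have hp1 := hT p hp
    have hn : (-a 1 * p 0 + a 0 * p 1) ^ 2 + (-a 0 * p 0 + -a 1 * p 1) ^ 2 = 1 := by
      linear_combination (p 0 ^ 2 + p 1 ^ 2) * ha + hp1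
    simp only [M, Set.mem_ofPred_eq, lin2_zero, lin2_one]
    refine ⟨hn.le, ?_⟩
    rcases hT2 p hp with h | h
    · rw [h]
      have e1 : -a 1 * a 0 + a 0 * a 1 = 0 := by ring
      have e2 : -a 0 * a 0 + -a 1 * a 1 = -1 := by linarith
      rw [e1, e2]; simp
    · set X := -a 1 * p 0 + a 0 * p 1
      have hY : 1 / 2 ≤ -a 0 * p 0 + -a 1 * p 1 := by linarith
      set Y := -a 0 * p 0 + -a 1 * p 1
      have : |√3 * X| ≤ 1 + Y := by
        apply abs_le_of_sq_le_sq _ (by linarith)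
        rw [mul_pow, Real.sq_sqrt (by norm_num)]
        nlinarith
      rw [abs_le] at this
      constructor <;> linarith
  · rw [Finset.coe_image, ← LinearMap.image_convexHull, vol_lin2]
    rw [show -a 1 * -a 1 - a 0 * -a 0 = 1 by linarith]; simp

lemma chord_mem (a b p : Pt) (ha : a 0 ^ 2 + a 1 ^ 2 = 1) (hb : b 0 ^ 2 + b 1 ^ 2 = 1)
    (hab : 0 < (b 0 - a 0) ^ 2 + (b 1 - a 1) ^ 2) 
    (hp : p 0 ^ 2 + p 1 ^ 2 ≤ 1) (h : crs a b p = 0) (X : Set Pt) (hX : Convex ℝ X) (haX : a ∈ X) (hbX : b ∈ X) :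
    p ∈ X := by
  obtain ⟨D, hD⟩ : ∃ D, D = (b 0 - a 0) ^ 2 + (b 1 - a 1) ^ 2 := ⟨_, rfl⟩
  rw [← hD] at hab
  obtain ⟨t, ht⟩ : ∃ t, t = ((p 0 - a 0) * (b 0 - a 0) + (p 1 - a 1) * (b 1 - a 1)) / D := ⟨_, rfl⟩
  have htD : t * D = (p 0 - a 0) * (b 0 - a 0) + (p 1 - a 1) * (b 1 - a 1) := by rw [ht]; field_simp
  unfold crs at h
  have e0 : p 0 = a 0 + t * (b 0 - a 0) := by
    apply mul_left_cancel₀ hab.ne'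
    linear_combination (-(b 0 - a 0)) * htD + (p 0 - a 0) * hD - (b 1 - a 1) * h
  have e1 : p 1 = a 1 + t * (b 1 - a 1) := by
    apply mul_left_cancel₀ hab.ne'
    linear_combination (-(b 1 - a 1)) * htD + (p 1 - a 1) * hD + (b 0 - a 0) * h
  have e2 : p 0 ^ 2 + p 1 ^ 2 = 1 + (t ^ 2 - t) * D := by
    rw [e0, e1, hD]; linear_combination (1 - t) * ha + t * hb
  have e3 : t ^ 2 - t ≤ 0 := by
    by_contra hcon
    push Not at hcon
    have := mul_pos hcon hab
    linarith
  have t0 : 0 ≤ t := by nlinarith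
  have t1 : t ≤ 1 := by nlinarith
  have := hX haX hbX (a := 1 - t) (b := t) (by linarith) t0 (by ring)
  convert this using 1
  apply pt_ext <;> simp only [PiLp.add_apply, PiLp.smul_apply, smul_eq_mul]
  · rw [e0]; ring
  · rw [e1]; ring

lemma convex_disk : Convex ℝ {p : Pt | p 0 ^ 2 + p 1 ^ 2 ≤ 1} := by
  have : {p : Pt | p 0 ^ 2 + p 1 ^ 2 ≤ 1} = closedBall 0 1 := by
    ext p
    rw [mem_closedBall_zero_iff, ← sq_le_one_iff₀ (norm_nonneg _), EuclideanSpace.real_norm_sq_eq, Fin.sum_univ_two]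
    rfl
  rw [this]; exact convex_closedBall _ _

lemma cut_aux (a b x y p : Pt) (ha : a 0 ^ 2 + a 1 ^ 2 = 1) (hb : b 0 ^ 2 + b 1 ^ 2 = 1)
    (hab : 0 < (b 0 - a 0) ^ 2 + (b 1 - a 1) ^ 2) 
    (hx : x 0 ^ 2 + x 1 ^ 2 ≤ 1) (hy : y 0 ^ 2 + y 1 ^ 2 ≤ 1)
    (hxh : crs a b x ≤ 0) (hyh : 0 ≤ crs a b y) (hp : p ∈ segment ℝ x y) (hph : crs a b p ≤ 0)
    (X : Set Pt) (hX : Convex ℝ X) (haX : a ∈ X) (hbX : b ∈ X) (hxX : x ∈ X) :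
    p ∈ X := by
  rcases hyh.eq_or_lt with h | h
  · have := chord_mem a b y ha hb hab hy h.symm X hX haX hbX
    exact hX.segment_subset hxX this hp
  obtain ⟨t', t, ht', ht, htt, rfl⟩ := hp
  have et : t' = 1 - t := by linarith
  subst et
  have haff : ∀ τ : ℝ, crs a b ((1 - τ) • x + τ • y) = (1 - τ) * crs a b x + τ * crs a b y := by
    intro τ; unfold crs; simp only [PiLp.add_apply, PiLp.smul_apply, smul_eq_mul]; ring
  rw [haff] at hph
  set u := crs a b x
  set v := crs a b y
  have hvu : 0 < v - u := by linarith
  obtain ⟨τ, hτ⟩ : ∃ τ, τ = - u / (v - u) := ⟨_, rfl⟩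
  have hτe : τ * (v - u) = -u := by rw [hτ]; field_simp
  have hτ0 : 0 ≤ τ := by rw [hτ]; exact div_nonneg (by linarith) hvu.le
  have hτ1 : τ ≤ 1 := by rw [hτ, div_le_one hvu]; linarith
  have htτ : t ≤ τ := by
    by_contra hcon
    push Not at hcon
    have := mul_lt_mul_of_pos_right hcon hvu
    linarith
  have hz : (1 - τ) • x + τ • y ∈ X := by
    refine chord_mem a b _ ha hb hab ?_ ?_ X hX haX hbX
    · exact convex_disk hx hy (by linarith) hτ0 (by ring)
    · rw [haff]; linarith
  rcases hτ0.eq_or_lt with h0 | h0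
  · have : t = 0 := by linarith
    rw [this]; simpa using hxX
  · have := hX hxX hz (a := 1 - t / τ) (b := t / τ) (by rw [sub_nonneg, div_le_one h0]; exact htτ) (by positivity) (by ring)
    convert this using 1
    apply pt_ext <;> simp only [PiLp.add_apply, PiLp.smul_apply, smul_eq_mul] <;> field_simp <;> ring


lemma EE_split {s k : ℝ} (hs0 : 0 ≤ s) (hs : 3 / 4 ≤ s ^ 2) (hsk : s ^ 2 + k ^ 2 = 1) (hk : 0 ≤ k)
    (p : Pt) (hp : p ∈ EE s k) : (p 1 < 0 ∧ |p 0| ^ 2 + (-p 1) ^ 2 = 1 ∧ s * |p 0| + k * (-p 1) ≤ 1 / 2 ∧ p 1 ≤ -(1 / 2)) ∨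
      (0 < p 1 ∧ |p 0| ^ 2 + p 1 ^ 2 = 1 ∧ s * |p 0| - k * p 1 ≤ 1 / 2 ∧ 1 / 2 ≤ p 1) := by
  obtain ⟨h0, h1, h2⟩ := hp
  have hk2 : k ≤ 1 / 2 := by nlinarith
  have habs : s * |p 0| - k * p 1 ≤ 1 / 2 := by
    rcases abs_cases (p 0) with h | h <;> rw [h.1] <;> linarith
  have hsq : |p 0| ^ 2 + p 1 ^ 2 = 1 := by rw [sq_abs]; exact h0
  rcases lt_or_ge (p 1) 0 with h | h
  · left
    refine ⟨h, by rw [neg_sq]; exact hsq, by linarith, ?_⟩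
    have := bot_aux hs0 hs hk (abs_nonneg (p 0)) (y := -p 1) (by linarith) (by rw [neg_sq]; exact hsq) (by linarith)
    nlinarith
  · right
    have := top_aux hs0 hsk hk hk2 (abs_nonneg (p 0)) h hsq habs
    exact ⟨by linarith, hsq, habs, this⟩

lemma core_circle {s k : ℝ} (hs0 : 0 ≤ s) (hs : 3 / 4 ≤ s ^ 2) (hsk : s ^ 2 + k ^ 2 = 1) (hk : 0 ≤ k)
    (S : Finset Pt) (hS : (S : Set Pt) ⊆ EE s k) :
    ∃ T' : Finset Pt, (T' : Set Pt) ⊆ M ∧ T'.card ≤ S.card ∧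
      volume (convexHull ℝ (S : Set Pt)) ≤ volume (convexHull ℝ (T' : Set Pt)) := by
  classical
  have hcirc : ∀ p ∈ S, p 0 ^ 2 + p 1 ^ 2 = 1 := fun p hp => (hS hp).1
  have hsplit := fun p (hp : p ∈ S) => EE_split hs0 hs hsk hk p (hS hp)
  set A := S.filter (fun p => p 1 < 0) with hA
  set B := S.filter (fun p => ¬ p 1 < 0) with hB
  have hAS : ∀ p ∈ A, p ∈ S := fun p hp => (Finset.mem_filter.1 hp).1
  have hBS : ∀ p ∈ B, p ∈ S := fun p hp => (Finset.mem_filter.1 hp).1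
  have hAneg : ∀ p ∈ A, p 1 < 0 := fun p hp => (Finset.mem_filter.1 hp).2
  have hBpos : ∀ p ∈ B, 0 < p 1 := fun p hp => by
    rcases hsplit p (hBS p hp) with h | h
    · exact absurd h.1 (Finset.mem_filter.1 hp).2
    · exact h.1
  rcases A.eq_empty_or_nonempty with hAe | hAne
  · refine fit_M S !₂[0, -1] (by simp) hcirc (fun p hp => Or.inr ?_)
    rcases hsplit p hp with h | h
    · have : p ∈ A := Finset.mem_filter.2 ⟨hp, h.1⟩
      rw [hAe] at this; simp at this
    · simp; linarith [h.2.2.2]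
  rcases B.eq_empty_or_nonempty with hBe | hBne
  · refine fit_M S !₂[0, 1] (by simp) hcirc (fun p hp => Or.inr ?_)
    rcases hsplit p hp with h | h
    · simp; linarith [h.2.2.2]
    · have : p ∈ B := Finset.mem_filter.2 ⟨hp, by linarith [h.1]⟩
      rw [hBe] at this; simp at this
  have hdot : ∀ p ∈ A, ∀ q ∈ B, p 0 * q 0 + p 1 * q 1 ≤ -(1 / 2) := by
    intro p hp q hq
    have hpn := hAneg p hp
    have hqn := hBpos q hq
    rcases hsplit p (hAS p hp) with h | h
    swap
    · linarith [h.1]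
    rcases hsplit q (hBS q hq) with h' | h'
    · linarith [h'.1]
    have := dot_aux hs0 hs hsk hk (abs_nonneg (p 0)) (by linarith) h.2.1 h.2.2.1
      (abs_nonneg (q 0)) h'.1.le h'.2.1 h'.2.2.1
    have h3 := le_abs_self (p 0 * q 0)
    rw [abs_mul] at h3
    linarith
  have hdot1 : ∀ p ∈ S, ∀ q ∈ S, -1 ≤ p 0 * q 0 + p 1 * q 1 := by
    intro p hp q hq
    nlinarith [hcirc p hp, hcirc q hq, sq_nonneg (p 0 + q 0), sq_nonneg (p 1 + q 1)]
  obtain ⟨a, haA, hamin⟩ := A.exists_min_image (fun p => p 0) hAne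
  obtain ⟨b, hbB, hbmax⟩ := B.exists_max_image (fun p => p 0) hBne
  have ha := hcirc a (hAS a haA)
  have hb := hcirc b (hBS b hbB)
  have han := hAneg a haA
  have hbp := hBpos b hbB
  have hab : 0 < (b 0 - a 0) ^ 2 + (b 1 - a 1) ^ 2 := by nlinarith [sq_nonneg (b 0 - a 0)]
  have hdab := hdot a haA b hbB
  have hAside : ∀ p ∈ A, crs a b p ≤ 0 := by
    intro p hp
    have h1 := hdot p hp b hbB
    have h2 := hdot1 p (hAS p hp) a (hAS a haA)
    have h3 := hcirc p (hAS p hp)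
    have h4 := hAneg p hp
    have h5 := hamin p hp
    simp only at h5
    have key : (p 1 + a 1) * crs a b p = (p 0 - a 0) * (1 + (p 0 * a 0 + p 1 * a 1) - (p 0 * b 0 + p 1 * b 1) - (a 0 * b 0 + a 1 * b 1)) := by
      unfold crs
      linear_combination (b 0 - a 0) * h3 - (b 0 - a 0) * ha + (p 0 - a 0) * ha
    have h6 : 0 ≤ (p 1 + a 1) * crs a b p := by
      rw [key]; exact mul_nonneg (by linarith) (by linarith)
    by_contra hcon
    push Not at hcon
    nlinarith [mul_pos hcon (show 0 < -(p 1 + a 1) by linarith)]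
  have hBside : ∀ p ∈ B, 0 ≤ crs a b p := by
    intro p hp
    have h1 := hdot a haA p hp
    have h2 := hdot1 p (hBS p hp) b (hBS b hbB)
    have h3 := hcirc p (hBS p hp)
    have h4 := hBpos p hp
    have h5 := hbmax p hp
    simp only at h5
    have key : (p 1 + b 1) * crs a b p = (b 0 - p 0) * (1 + (p 0 * b 0 + p 1 * b 1) - (a 0 * p 0 + a 1 * p 1) - (a 0 * b 0 + a 1 * b 1)) := by
      unfold crs
      linear_combination (b 0 - a 0) * h3 - (b 0 - a 0) * hb + (b 0 - p 0) * hb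
    have h6 : 0 ≤ (p 1 + b 1) * crs a b p := by
      rw [key]; exact mul_nonneg (by linarith) (by linarith)
    exact nonneg_of_mul_nonneg_right h6 (by linarith)
  -- half plane as in `convex_half`
  have hcrs : ∀ p : Pt, crs a b p = (a 1 - b 1) * p 0 + (b 0 - a 0) * p 1 + (a 0 * b 1 - a 1 * b 0) := by
    intro p; unfold crs; ring
  have hullA : ∀ p ∈ convexHull ℝ (A : Set Pt), crs a b p ≤ 0 := by
    intro p hp
    have := hull_half (a 1 - b 1) (b 0 - a 0) (-(a 0 * b 1 - a 1 * b 0)) _ (fun q hq => by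
      have := hAside q hq
      rw [hcrs] at this; linarith) p hp
    rw [hcrs]; linarith
  have hullB : ∀ p ∈ convexHull ℝ (insert a (B : Set Pt)), 0 ≤ crs a b p := by
    intro p hp
    have := hull_half (-(a 1 - b 1)) (-(b 0 - a 0)) ((a 0 * b 1 - a 1 * b 0)) _ (fun q hq => by
      have : 0 ≤ crs a b q := by
        rcases hq with rfl | hq
        · unfold crs; simp
        · exact hBside q hq
      rw [hcrs] at this; linarith) p hp
    rw [hcrs]; linarith
  have hdiskS : ∀ X : Finset Pt, X ⊆ S → ∀ p ∈ convexHull ℝ (X : Set Pt), p 0 ^ 2 + p 1 ^ 2 ≤ 1 := by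
    intro X hX p hp
    exact convexHull_min (show (X : Set Pt) ⊆ {p : Pt | p 0 ^ 2 + p 1 ^ 2 ≤ 1} from
      fun q hq => (hcirc q (hX hq)).le) convex_disk hp
  have hcut : convexHull ℝ (S : Set Pt) ⊆
      (convexHull ℝ (insert b (A : Set Pt)) ∩ {p | crs a b p < 0}) ∪ convexHull ℝ (insert a (B : Set Pt)) := by
    intro p hp
    have hSAB : (S : Set Pt) = (A : Set Pt) ∪ (B : Set Pt) := by
      rw [← Finset.coe_union, hA, hB, Finset.filter_union_filter_not_eq]
    rw [hSAB, convexHull_union hAne hBne, mem_convexJoin] at hp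
    obtain ⟨x, hx, y, hy, hseg⟩ := hp
    have hxd := hdiskS A hAS x hx
    have hyd := hdiskS B hBS y hy
    have hxh := hullA x hx
    have hyh := hullB y (convexHull_mono (Set.subset_insert _ _) hy)
    rcases lt_or_ge (crs a b p) 0 with h | h
    · left
      refine ⟨?_, h⟩
      exact cut_aux a b x y p ha hb hab hxd hyd hxh hyh hseg h.le _ (convex_convexHull ℝ _)
        (subset_convexHull ℝ _ (Set.mem_insert_of_mem _ haA)) (subset_convexHull ℝ _ (Set.mem_insert _ _))
        (convexHull_mono (Set.subset_insert _ _) hx)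
    · right
      have hneg : ∀ q, crs b a q = - crs a b q := by intro q; unfold crs; ring
      refine cut_aux b a y x p hb ha (by nlinarith) hyd hxd (by rw [hneg]; linarith) (by rw [hneg]; linarith)
        (by rw [segment_symm]; exact hseg) (by rw [hneg]; linarith) _ (convex_convexHull ℝ _)
        (subset_convexHull ℝ _ (Set.mem_insert_of_mem _ hbB)) (subset_convexHull ℝ _ (Set.mem_insert _ _))
        (convexHull_mono (Set.subset_insert _ _) hy)
  -- reflection
  obtain ⟨c, hc⟩ : ∃ c, c = a 0 * b 0 - a 1 * b 1 := ⟨_, rfl⟩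
  obtain ⟨d, hd⟩ : ∃ d, d = a 1 * b 0 + a 0 * b 1 := ⟨_, rfl⟩
  have hcd : c ^ 2 + d ^ 2 = 1 := by
    rw [hc, hd]; linear_combination (b 0 ^ 2 + b 1 ^ 2) * ha + hb
  have ca : c * a 0 + d * a 1 = b 0 := by rw [hc, hd]; linear_combination b 0 * ha
  have da : d * a 0 - c * a 1 = b 1 := by rw [hc, hd]; linear_combination b 1 * ha
  have cb : c * b 0 + d * b 1 = a 0 := by rw [hc, hd]; linear_combination a 0 * hb
  have db : d * b 0 - c * b 1 = a 1 := by rw [hc, hd]; linear_combination a 1 * hb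
  obtain ⟨σ, hσ⟩ : ∃ σ : Pt →ₗ[ℝ] Pt, σ = lin2 c d d (-c) := ⟨_, rfl⟩
  have σ0 : ∀ p, σ p 0 = c * p 0 + d * p 1 := fun p => by rw [hσ, lin2_zero]
  have σ1 : ∀ p, σ p 1 = d * p 0 - c * p 1 := fun p => by rw [hσ, lin2_one]; ring
  have σa : σ a = b := pt_ext (by rw [σ0, ca]) (by rw [σ1, da])
  have σb : σ b = a := pt_ext (by rw [σ0, cb]) (by rw [σ1, db])
  have σvol : ∀ X : Set Pt, volume (σ '' X) = volume X := fun X => by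
    rw [hσ]; apply vol_lin2
    rw [show c * -c - d * d = -1 by linarith]; simp
  have σcrs : ∀ p, crs a b (σ p) = crs a b p := by
    intro p
    rw [hcrs, hcrs, σ0, σ1]
    linear_combination p 1 * (ca - cb) - p 0 * (da - db)
  obtain ⟨T, hTdef⟩ : ∃ T : Finset Pt, T = insert a ((A.erase a).image σ ∪ B) := ⟨_, rfl⟩
  have hTcard : T.card ≤ S.card := by
    have h1 : T.card ≤ ((A.erase a).image σ ∪ B).card + 1 := by rw [hTdef]; exact Finset.card_insert_le _ _
    have h2 := Finset.card_union_le ((A.erase a).image σ) B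
    have h3 : ((A.erase a).image σ).card ≤ (A.erase a).card := Finset.card_image_le
    have h4 := Finset.card_erase_of_mem haA
    have h5 : 0 < A.card := Finset.card_pos.2 hAne
    have h6 : A.card + B.card = S.card := Finset.card_filter_add_card_filter_not _
    omega
  have haT : a ∈ T := by rw [hTdef]; exact Finset.mem_insert_self _ _
  have hBT : ∀ p ∈ B, p ∈ T := fun p hp => by
    rw [hTdef]; exact Finset.mem_insert_of_mem (Finset.mem_union_right _ hp)
  have hAT : ∀ p ∈ A, σ p ∈ T := fun p hp => by
    by_cases hpa : p = a
    · rw [hpa, σa]; exact hBT b hbB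
    · rw [hTdef]
      exact Finset.mem_insert_of_mem (Finset.mem_union_left _ (Finset.mem_image_of_mem _ (Finset.mem_erase.2 ⟨hpa, hp⟩)))
  have hTmem : ∀ p ∈ T, p = a ∨ p ∈ B ∨ ∃ q ∈ A, p = σ q := by
    intro p hp
    rw [hTdef, Finset.mem_insert, Finset.mem_union, Finset.mem_image] at hp
    rcases hp with h | ⟨q, hq, h⟩ | h
    · exact Or.inl h
    · exact Or.inr (Or.inr ⟨q, Finset.mem_of_mem_erase hq, h.symm⟩)
    · exact Or.inr (Or.inl h)
  obtain ⟨T', hT'M, hT'c, hT'v⟩ := fit_M T a ha (by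
      intro p hp
      rcases hTmem p hp with rfl | h | ⟨q, hq, rfl⟩
      · exact ha
      · exact hcirc p (hBS p h)
      · rw [σ0, σ1]
        linear_combination (q 0 ^ 2 + q 1 ^ 2) * hcd + hcirc q (hAS q hq)) (by
      intro p hp
      rcases hTmem p hp with h | h | ⟨q, hq, rfl⟩
      · exact Or.inl h
      · right
        have := hdot a haA p h
        linarith
      · right
        have := hdot q hq b hbB
        rw [σ0, σ1]
        rw [← ca, ← da] at this
        linarith)
  refine ⟨T', hT'M, hT'c.trans hTcard, le_trans ?_ hT'v⟩
  have hsup : σ '' (convexHull ℝ (insert b (A : Set Pt)) ∩ {p | crs a b p < 0}) ∪ convexHull ℝ (insert a (B : Set Pt))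
      ⊆ convexHull ℝ (T : Set Pt) := by
    apply Set.union_subset
    · refine (Set.image_mono Set.inter_subset_left).trans ?_
      rw [LinearMap.image_convexHull]
      apply convexHull_mono
      rintro _ ⟨p, rfl | hp, rfl⟩
      · rw [σb]; exact haT
      · exact hAT p hp
    · apply convexHull_mono
      rintro p (rfl | hp)
      · exact haT
      · exact hBT p hp
  have hdis : Disjoint (σ '' (convexHull ℝ (insert b (A : Set Pt)) ∩ {p | crs a b p < 0})) (convexHull ℝ (insert a (B : Set Pt))) := by
    rw [Set.disjoint_left]
    rintro _ ⟨p, hp, rfl⟩ h2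
    have h3 := hullB _ h2
    rw [σcrs] at h3
    have h4 : crs a b p < 0 := hp.2
    linarith
  have hmeas : MeasurableSet (convexHull ℝ (insert a (B : Set Pt))) := by
    have := meas_hull (insert a B)
    rwa [Finset.coe_insert] at this
  calc _ ≤ _ := measure_mono hcut
    _ ≤ _ := measure_union_le _ _
    _ = volume (σ '' (convexHull ℝ (insert b (A : Set Pt)) ∩ {p | crs a b p < 0})) + volume (convexHull ℝ (insert a (B : Set Pt))) := by
      rw [σvol]
    _ = _ := (measure_union hdis hmeas).symm
    _ ≤ _ := measure_mono hsup

lemma core {s k : ℝ} (hs0 : 0 ≤ s) (hs : 3 / 4 ≤ s ^ 2) (hsk : s ^ 2 + k ^ 2 = 1) (hk : 0 ≤ k)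
    (S : Finset Pt) (hS : ∀ p ∈ S, p 0 ^ 2 + p 1 ^ 2 ≤ 1 ∧ s * p 0 - k * p 1 ≤ 1 / 2 ∧ - s * p 0 - k * p 1 ≤ 1 / 2) :
    ∃ T' : Finset Pt, (T' : Set Pt) ⊆ M ∧ T'.card ≤ S.card ∧
      volume (convexHull ℝ (S : Set Pt)) ≤ volume (convexHull ℝ (T' : Set Pt)) := by
  have hk2 : k ≤ 1 / 2 := by nlinarith
  obtain ⟨T, hT, hTc, hTv⟩ := replace_all (EE s k) S ∅ (by simp) (fun p hp =>
    mem_hull_EE s k hk hk2 p (hS p hp).1 (hS p hp).2.1 (hS p hp).2.2)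
  obtain ⟨T', h1, h2, h3⟩ := core_circle hs0 hs hsk hk T hT
  refine ⟨T', h1, h2.trans (by simpa using hTc), le_trans ?_ h3⟩
  simpa using hTv

lemma astar_ge (n : ℕ) (T : Finset Pt) (hT : (T : Set Pt) ⊆ M) (hc : T.card ≤ n) :
    (volume (convexHull ℝ (T : Set Pt))).toReal ≤ astar n := by
  refine le_csSup ?_ ⟨T, hT, hc, rfl⟩
  refine ⟨(volume (closedBall (0 : Pt) 1)).toReal, ?_⟩
  rintro _ ⟨S, hS, -, rfl⟩
  refine ENNReal.toReal_mono measure_closedBall_lt_top.ne (measure_mono ?_)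
  refine convexHull_min (fun p hp => ?_) (convex_closedBall _ _)
  rw [mem_closedBall_zero_iff, ← sq_le_one_iff₀ (norm_nonneg _), EuclideanSpace.real_norm_sq_eq, Fin.sum_univ_two]
  exact (hS hp).1

lemma vol_fin (T : Finset Pt) : volume (convexHull ℝ (T : Set Pt)) ≠ ⊤ :=
  (T.finite_toSet.isCompact_convexHull ℝ).measure_lt_top.ne

/-- Scalar version: unit normals `u`, `v` at angle at least `2π/3`. -/
lemma core_frame (u0 u1 v0 v1 : ℝ) (hu : u0 ^ 2 + u1 ^ 2 = 1) (hv : v0 ^ 2 + v1 ^ 2 = 1)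
    (huv : u0 * v0 + u1 * v1 ≤ -(1 / 2)) (S : Finset Pt)
    (hS : ∀ p ∈ S, p 0 ^ 2 + p 1 ^ 2 ≤ 1 ∧ u0 * p 0 + u1 * p 1 ≤ 1 / 2 ∧ v0 * p 0 + v1 * p 1 ≤ 1 / 2) :
    ∃ T' : Finset Pt, (T' : Set Pt) ⊆ M ∧ T'.card ≤ S.card ∧
      volume (convexHull ℝ (S : Set Pt)) ≤ volume (convexHull ℝ (T' : Set Pt)) := by
  classical
  obtain ⟨D, hD⟩ : ∃ D, D = √((u0 - v0) ^ 2 + (u1 - v1) ^ 2) := ⟨_, rfl⟩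
  have hD2 : D ^ 2 = (u0 - v0) ^ 2 + (u1 - v1) ^ 2 := by rw [hD, Real.sq_sqrt (by positivity)]
  have hD3 : 3 ≤ D ^ 2 := by rw [hD2]; linarith
  have hD0 : 0 ≤ D := by rw [hD]; positivity
  have hDpos : 0 < D := by
    rcases hD0.eq_or_lt with h | h
    · rw [← h] at hD3; norm_num at hD3
    · exact h
  obtain ⟨c, hc⟩ : ∃ c, c = (u0 - v0) / D := ⟨_, rfl⟩
  obtain ⟨d, hd⟩ : ∃ d, d = (u1 - v1) / D := ⟨_, rfl⟩
  have hcD : u0 - v0 = c * D := by rw [hc]; field_simp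
  have hdD : u1 - v1 = d * D := by rw [hd]; field_simp
  have hcd : c ^ 2 + d ^ 2 = 1 := by
    rw [hcD, hdD] at hD2
    have : D ^ 2 * (c ^ 2 + d ^ 2 - 1) = 0 := by linear_combination -hD2
    rcases mul_eq_zero.1 this with h | h
    · linarith
    · linarith
  have hperp : c * (u0 + v0) + d * (u1 + v1) = 0 := by
    apply mul_left_cancel₀ hDpos.ne'
    linear_combination -(u0 + v0) * hcD - (u1 + v1) * hdD + hu - hv
  obtain ⟨ε, hε, hεk⟩ : ∃ ε : ℝ, ε ^ 2 = 1 ∧ 0 ≤ ε * (d * (u0 + v0) - c * (u1 + v1)) / 2 := by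
    rcases le_total 0 (d * (u0 + v0) - c * (u1 + v1)) with h | h
    · exact ⟨1, by norm_num, by linarith⟩
    · exact ⟨-1, by norm_num, by linarith⟩
  obtain ⟨k, hk⟩ : ∃ k, k = ε * (d * (u0 + v0) - c * (u1 + v1)) / 2 := ⟨_, rfl⟩
  rw [← hk] at hεk
  have eu0 : u0 = c * (D / 2) + ε * d * k := by
    rw [hk]
    linear_combination (1 / 2) * hcD - (1 / 2) * (d * (d * (u0 + v0) - c * (u1 + v1))) * hε - (1 / 2) * (u0 + v0) * hcd
      + (1 / 2) * c * hperp
  have eu1 : u1 = d * (D / 2) - ε * c * k := by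
    rw [hk]
    linear_combination (1 / 2) * hdD + (1 / 2) * (c * (d * (u0 + v0) - c * (u1 + v1))) * hε - (1 / 2) * (u1 + v1) * hcd
      + (1 / 2) * d * hperp
  have ev0 : v0 = - c * (D / 2) + ε * d * k := by linarith
  have ev1 : v1 = - d * (D / 2) - ε * c * k := by linarith
  have hsk : (D / 2) ^ 2 + k ^ 2 = 1 := by
    rw [eu0, eu1] at hu
    linear_combination hu - ((D / 2) ^ 2 + ε ^ 2 * k ^ 2) * hcd - k ^ 2 * hε
  have hdet : c * (ε * c) - d * (-ε * d) = ε := by linear_combination ε * hcd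
  have hεabs : |ε| = 1 := by rwa [← pow_eq_one_iff_of_nonneg (abs_nonneg ε) two_ne_zero, sq_abs]
  obtain ⟨T', h1, h2, h3⟩ := core (s := D / 2) (k := k) (by positivity) (by linarith) hsk hεk
    (S.image (lin2 c d (-ε * d) (ε * c))) (by
      intro q hq
      rw [Finset.mem_image] at hq
      obtain ⟨p, hp, rfl⟩ := hq
      obtain ⟨p1, p2, p3⟩ := hS p hp
      rw [lin2_zero, lin2_one]
      refine ⟨?_, ?_, ?_⟩
      · have : (c * p 0 + d * p 1) ^ 2 + (-ε * d * p 0 + ε * c * p 1) ^ 2 = p 0 ^ 2 + p 1 ^ 2 := by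
          linear_combination (p 0 ^ 2 + p 1 ^ 2) * hcd + (-d * p 0 + c * p 1) ^ 2 * hε
        linarith
      · rw [eu0, eu1] at p2; linarith
      · rw [ev0, ev1] at p3; linarith)
  refine ⟨T', h1, h2.trans Finset.card_image_le, le_trans (le_of_eq ?_) h3⟩
  rw [Finset.coe_image, ← LinearMap.image_convexHull, vol_lin2]
  rw [hdet, hεabs]

lemma half_aux (C C' p : Pt) (h1 : 0 < dist C C') (h1' : dist C C' ≤ 1) (h : dist p C ≤ dist p C') :
    (C' 0 - C 0) / dist C C' * (p 0 - C 0) + (C' 1 - C 1) / dist C C' * (p 1 - C 1) ≤ 1 / 2 := by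
  have hsq : dist p C ^ 2 ≤ dist p C' ^ 2 := pow_le_pow_left₀ dist_nonneg h 2
  have hd : ∀ a b : Pt, dist a b ^ 2 = (a 0 - b 0) ^ 2 + (a 1 - b 1) ^ 2 := by
    intro a b
    rw [dist_eq_norm, EuclideanSpace.real_norm_sq_eq, Fin.sum_univ_two]; rfl
  have hcc := hd C C'
  rw [hd, hd] at hsq
  set D := dist C C'
  have : (C' 0 - C 0) / D * (p 0 - C 0) + (C' 1 - C 1) / D * (p 1 - C 1) =
    ((C' 0 - C 0) * (p 0 - C 0) + (C' 1 - C 1) * (p 1 - C 1)) / D := by ring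
  rw [this, div_le_iff₀ h1]
  nlinarith

/-- A Voronoi cell of a disk whose center is at positive distance at most 1 from the centers of
two neighboring disks forming an angle of at least `2π/3` has area at most `a*(n)`, where `n`
bounds the number of its vertices. -/
theorem voronoi_cell_area_le_astar (C C' C'' : Pt)
    (h1 : 0 < dist C C') (h1' : dist C C' ≤ 1)
    (h2 : 0 < dist C C'') (h2' : dist C C'' ≤ 1)
    (hangle : 2 * π / 3 ≤ EuclideanGeometry.angle C' C C'')
    (n : ℕ) (hn : 3 ≤ n) (S : Finset Pt) (hcard : S.card ≤ n)
    (P : Set Pt) (hP : P = convexHull ℝ (S : Set Pt))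
    (hPball : P ⊆ closedBall C 1)
    (hPvor : ∀ p ∈ P, dist p C ≤ dist p C' ∧ dist p C ≤ dist p C'') :
    (volume P).toReal ≤ astar n := by
  classical
  have hd : ∀ a b : Pt, dist a b ^ 2 = (a 0 - b 0) ^ 2 + (a 1 - b 1) ^ 2 := by
    intro a b
    rw [dist_eq_norm, EuclideanSpace.real_norm_sq_eq, Fin.sum_univ_two]; rfl
  have hu : ((C' 0 - C 0) / dist C C') ^ 2 + ((C' 1 - C 1) / dist C C') ^ 2 = 1 := by
    rw [div_pow, div_pow, ← add_div, div_eq_one_iff_eq (by positivity), hd]; ring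
  have hv : ((C'' 0 - C 0) / dist C C'') ^ 2 + ((C'' 1 - C 1) / dist C C'') ^ 2 = 1 := by
    rw [div_pow, div_pow, ← add_div, div_eq_one_iff_eq (by positivity), hd]; ring
  have huv : (C' 0 - C 0) / dist C C' * ((C'' 0 - C 0) / dist C C'')
      + (C' 1 - C 1) / dist C C' * ((C'' 1 - C 1) / dist C C'') ≤ -(1 / 2) := by
    have hcos : Real.cos (EuclideanGeometry.angle C' C C'') ≤ Real.cos (2 * π / 3) :=
      Real.cos_le_cos_of_nonneg_of_le_pi (by positivity) (EuclideanGeometry.angle_le_pi _ _ _) hangle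
    have h23 : Real.cos (2 * π / 3) = -(1 / 2) := by
      rw [show 2 * π / 3 = π - π / 3 by ring, Real.cos_pi_sub, Real.cos_pi_div_three]
    rw [h23, EuclideanGeometry.angle, InnerProductGeometry.cos_angle] at hcos
    refine le_trans (le_of_eq ?_) hcos
    rw [vsub_eq_sub, vsub_eq_sub, ← dist_eq_norm, ← dist_eq_norm, dist_comm C' C, dist_comm C'' C]
    simp only [PiLp.inner_apply, Fin.sum_univ_two, PiLp.sub_apply, RCLike.inner_apply, conj_trivial]
    field_simp
  obtain ⟨T', t1, t2, t3⟩ := core_frame _ _ _ _ hu hv huv (S.image (fun p => -C + p)) (by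
    intro q hq
    rw [Finset.mem_image] at hq
    obtain ⟨p, hp, rfl⟩ := hq
    have hpP : p ∈ P := by rw [hP]; exact subset_convexHull ℝ _ hp
    have e0 : (-C + p) 0 = p 0 - C 0 := by simp; ring
    have e1 : (-C + p) 1 = p 1 - C 1 := by simp; ring
    rw [e0, e1]
    refine ⟨?_, half_aux C C' p h1 h1' (hPvor p hpP).1, half_aux C C'' p h2 h2' (hPvor p hpP).2⟩
    have := hPball hpP
    rw [mem_closedBall] at this
    rw [← hd]
    exact pow_le_one₀ dist_nonneg this)
  have hvol : volume P = volume (convexHull ℝ ((S.image (fun p => -C + p) : Finset Pt) : Set Pt)) := by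
    have := AffineMap.image_convexHull (𝕜 := ℝ) ((AffineEquiv.constVAdd ℝ Pt (-C)).toAffineMap) (S : Set Pt)
    have e : ((AffineEquiv.constVAdd ℝ Pt (-C)).toAffineMap : Pt → Pt) = fun z => -C + z := by
      ext z; simp
    rw [e] at this
    rw [Finset.coe_image, ← this, Set.image_add_left, measure_preimage_add, hP]
  refine le_trans ?_ (astar_ge n T' t1 ((t2.trans Finset.card_image_le).trans hcard))
  rw [hvol]
  exact ENNReal.toReal_mono (vol_fin T') t3
end
end

section
/- Let Π ⊆ ℝ² be a convex hexagon and let P₁, …, P_N ⊆ ℝ² be convex polytopes (convex hulls of finite sets), each of which is either empty or has nonempty interior, such that ⋃ₙ Pₙ = Π and interior(Pₙ) ∩ interior(Pₘ) = ∅ whenever n ≠ m. If νₙ denotes the number of extreme points of Pₙ, then ν₁ + ⋯ + ν_N ≤ 6N. -/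
open Metric

noncomputable section

/-- A convex hexagon: a compact convex subset of the plane with nonempty interior having
exactly 6 extreme points. -/
def IsConvexHexagon (s : Set Pt) : Prop :=
  IsCompact s ∧ Convex ℝ s ∧ (interior s).Nonempty ∧ (Set.extremePoints ℝ s).ncard = 6

open Set Filter Topology

/-- A linear functional attains its maximum on a compact set at an extreme point. -/
lemma exists_max_ext (A : Set Pt) (hA : IsCompact A) (hne : A.Nonempty) (f : Pt →L[ℝ] ℝ) :
    ∃ M ∈ extremePoints ℝ A, ∀ x ∈ A, f x ≤ f M := by
  have hE : IsExposed ℝ A (f.toExposed A) := ContinuousLinearMap.toExposed.isExposed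
  obtain ⟨z, hz, hzm⟩ := hA.exists_isMaxOn hne f.continuous.continuousOn
  obtain ⟨M, hM⟩ := (hE.isCompact hA).extremePoints_nonempty ⟨z, hz, hzm⟩
  exact ⟨M, hE.isExtreme.extremePoints_subset_extremePoints hM, hM.1.2⟩

lemma ext_notMem_interior {A : Set Pt} {p : Pt} (hp : p ∈ extremePoints ℝ A) :
    p ∉ interior A :=
  fun h => Set.disjoint_left.1 (disjoint_interior_extremePoints A) h hp

lemma interior_lt (A : Set Pt) (f : Pt →L[ℝ] ℝ) (hf : f ≠ 0) (c : ℝ) (h : ∀ x ∈ A, f x ≤ c)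
    (y : Pt) (hy : y ∈ interior A) : f y < c := by
  obtain ⟨v, hv⟩ : ∃ v, f v ≠ 0 := by
    by_contra! hh
    exact hf (ContinuousLinearMap.ext hh)
  have hc : Tendsto (fun e : ℝ => y + (e * f v) • v) (𝓝[>] 0) (𝓝 y) := by
    have : Continuous (fun e : ℝ => y + (e * f v) • v) := by fun_prop
    have h2 := this.tendsto 0
    simp only [zero_mul, zero_smul, add_zero] at h2
    exact h2.mono_left nhdsWithin_le_nhds
  have h1 := hc.eventually (mem_interior_iff_mem_nhds.1 hy)
  obtain ⟨e, he, he0⟩ := (h1.and self_mem_nhdsWithin).exists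
  have h3 := h _ he
  simp only [map_add, map_smul, smul_eq_mul] at h3
  have : 0 < f v * f v := mul_self_pos.2 hv
  have := mul_pos (show (0:ℝ) < e from he0) this
  nlinarith

lemma exists_interior_level (A : Set Pt) (hA : Convex ℝ A) (hi : (interior A).Nonempty)
    (f : Pt →L[ℝ] ℝ) (m M : Pt) (hm : m ∈ A) (hM : M ∈ A) (r : ℝ) (h1 : f m < r) (h2 : r < f M) :
    ∃ y ∈ interior A, f y = r := by
  have hcl : A ⊆ closure (interior A) := by
    rw [hA.closure_interior_eq_closure_of_nonempty_interior hi]; exact subset_closure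
  obtain ⟨a, ha, ha'⟩ := mem_closure_iff.1 (hcl hm) {x | f x < r}
    (isOpen_lt f.continuous continuous_const) h1
  obtain ⟨b, hb, hb'⟩ := mem_closure_iff.1 (hcl hM) {x | r < f x}
    (isOpen_lt continuous_const f.continuous) h2
  exact hA.interior.isPreconnected.intermediate_value ha' hb' f.continuous.continuousOn
    ⟨le_of_lt ha, le_of_lt hb⟩

/-- A direction `u` spanning the kernel of a functional `f`. -/
def Dir (f : Pt →L[ℝ] ℝ) (u : Pt) : Prop :=
  f ≠ 0 ∧ f u = 0 ∧ ∀ x, f x = 0 → ∃ t : ℝ, x = t • u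

lemma Dir.level {f : Pt →L[ℝ] ℝ} {u : Pt} (h : Dir f u) {x y : Pt} (hxy : f y = f x) :
    ∃ t : ℝ, y = x + t • u := by
  obtain ⟨t, ht⟩ := h.2.2 (y - x) (by simp [hxy])
  exact ⟨t, by rw [← ht]; abel⟩

/-- All but two extreme points see the interior in direction `± u`. -/
lemma ncard_ext_le {f : Pt →L[ℝ] ℝ} {u : Pt} (h : Dir f u) (A : Set Pt) (hA : IsCompact A)
    (hc : Convex ℝ A) (hi : (interior A).Nonempty)
    (hinj : Set.InjOn f (extremePoints ℝ A)) (hfin : (extremePoints ℝ A).Finite) :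
    (extremePoints ℝ A).ncard ≤
      {p | p ∈ extremePoints ℝ A ∧ ∃ t : ℝ, p + t • u ∈ interior A}.ncard + 2 := by
  have hne := hi.mono interior_subset
  obtain ⟨M, hM, hM'⟩ := exists_max_ext A hA hne f
  obtain ⟨m, hm, hm'⟩ := exists_max_ext A hA hne (-f)
  have hsub : extremePoints ℝ A ⊆
      {p | p ∈ extremePoints ℝ A ∧ ∃ t : ℝ, p + t • u ∈ interior A} ∪ {M, m} := by
    intro p hp
    by_cases hpM : p = M
    · right; simp [hpM]
    by_cases hpm : p = m
    · right; simp [hpm]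
    left
    refine ⟨hp, ?_⟩
    have h1 : f p < f M := lt_of_le_of_ne (hM' p hp.1) (fun e => hpM (hinj hp hM e))
    have h2 : f m < f p := lt_of_le_of_ne (by simpa using hm' p hp.1)
      (fun e => hpm (hinj hp hm e.symm))
    obtain ⟨y, hy, hfy⟩ := exists_interior_level A hc hi f m M hm.1 hM.1 _ h2 h1
    obtain ⟨t, rfl⟩ := h.level hfy
    exact ⟨t, hy⟩
  have hf2 : {p | p ∈ extremePoints ℝ A ∧ ∃ t : ℝ, p + t • u ∈ interior A}.Finite :=
    hfin.subset fun p hp => hp.1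
  calc _ ≤ _ := Set.ncard_le_ncard hsub (hf2.union (by simp))
    _ ≤ _ := Set.ncard_union_le _ _
    _ ≤ _ := by gcongr; exact (Set.ncard_insert_le M {m}).trans (by simp)

lemma interior_inter_empty {A B : Set Pt} (hB : Convex ℝ B) (hi : (interior B).Nonempty)
    (hd : interior A ∩ interior B = ∅) {x : Pt} (hx : x ∈ interior A) (hxB : x ∈ B) : False := by
  have hcl : B ⊆ closure (interior B) := by
    rw [hB.closure_interior_eq_closure_of_nonempty_interior hi]; exact subset_closure
  obtain ⟨a, ha, ha'⟩ := mem_closure_iff.1 (hcl hxB) _ isOpen_interior hx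
  exact (hd ▸ (⟨ha, ha'⟩ : a ∈ interior A ∩ interior B) : a ∈ (∅ : Set Pt))

lemma same_ray {A B : Set Pt} (hA : Convex ℝ A) (hB : Convex ℝ B) {p u : Pt} (hpA : p ∈ A)
    (hpB : p ∈ B) {s t : ℝ} (hs : p + s • u ∈ interior A) (ht : p + t • u ∈ B)
    (hst : 0 < s * t) : ∃ x ∈ interior A, x ∈ B := by
  have hs0 : s ≠ 0 := by rintro rfl; simp at hst
  have ht0 : t ≠ 0 := by rintro rfl; simp at hst
  have h1 : 0 < t / s := by
    have : t / s = s * t / (s * s) := by field_simp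
    rw [this]; exact div_pos hst (mul_self_pos.2 hs0)
  refine ⟨p + (min 1 (t / s)) • (s • u), hA.add_smul_mem_interior hpA hs
    ⟨lt_min one_pos h1, min_le_left _ _⟩, ?_⟩
  have h2 : (min 1 (t / s)) • (s • u) = (min (s / t) 1) • (t • u) := by
    rw [smul_smul, smul_smul]
    congr 1
    rcases le_total 1 (t / s) with h | h
    · have : s / t ≤ 1 := by
        rw [← inv_div]; exact inv_le_one_of_one_le₀ h
      rw [min_eq_left h, min_eq_left this]; field_simp
    · have : 1 ≤ s / t := by
        rw [← inv_div]; exact (one_le_inv₀ h1).2 h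
      rw [min_eq_right h, min_eq_right this]; field_simp
  rw [h2]
  have h3 : 0 < s / t := by rw [← inv_div]; exact inv_pos.2 h1
  exact hB.add_smul_mem hpB ht ⟨(lt_min h3 one_pos).le, min_le_right _ _⟩

lemma nonext_dir {f : Pt →L[ℝ] ℝ} {u : Pt} (h : Dir f u) (C : Set Pt)
    (hc : Convex ℝ C) (hi : (interior C).Nonempty) {p : Pt} (hp : p ∈ C)
    (hpe : p ∉ extremePoints ℝ C) :
    (∃ t : ℝ, p + t • u ∈ interior C) ∨
      ∃ s t : ℝ, 0 < s ∧ t < 0 ∧ p + s • u ∈ C ∧ p + t • u ∈ C := by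
  rw [mem_extremePoints_iff_left] at hpe
  push Not at hpe
  obtain ⟨a, ha, b, hb, ⟨α, β, hα, hβ, hαβ, hpab⟩, hne⟩ := hpe hp
  have hf : α * f a + β * f b = f p := by rw [← hpab]; simp
  rcases lt_trichotomy (f a) (f p) with h1 | h1 | h1
  · left
    have h2 : f p < f b := by
      have e : β = 1 - α := by linarith
      subst e
      by_contra! hh
      nlinarith
    obtain ⟨y, hy, hfy⟩ := exists_interior_level C hc hi f a b ha hb _ h1 h2
    obtain ⟨t, rfl⟩ := h.level hfy
    exact ⟨t, hy⟩
  · right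
    have h2 : f b = f p := by
      have e : α = 1 - β := by linarith
      subst e
      have : β * (f b - f p) = 0 := by rw [h1] at hf; linarith
      rcases mul_eq_zero.1 this with h | h <;> linarith
    obtain ⟨t, ht⟩ := h.level h1
    obtain ⟨s, hs⟩ := h.level h2
    have ht0 : t ≠ 0 := by rintro rfl; apply hne; simpa using ht
    have hu : u ≠ 0 := by rintro rfl; apply hne; simpa using ht
    have hz : (α * t + β * s) • u = 0 := by
      have e : α = 1 - β := by linarith
      rw [ht, hs, e] at hpab
      have : (1 - β) • (p + t • u) + β • (p + s • u) - p = 0 := by rw [hpab]; simp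
      rw [← this, e]
      module
    have hz' : α * t + β * s = 0 := (smul_eq_zero.1 hz).resolve_right hu
    rcases lt_or_gt_of_ne ht0 with h0 | h0
    · refine ⟨s, t, ?_, h0, hs ▸ hb, ht ▸ ha⟩
      by_contra! hh
      nlinarith
    · refine ⟨t, s, h0, ?_, ht ▸ ha, hs ▸ hb⟩
      by_contra! hh
      nlinarith
  · left
    have h2 : f b < f p := by
      have e : β = 1 - α := by linarith
      subst e
      by_contra! hh
      nlinarith
    obtain ⟨y, hy, hfy⟩ := exists_interior_level C hc hi f b a hb ha _ h2 h1
    obtain ⟨t, rfl⟩ := h.level hfy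
    exact ⟨t, hy⟩

lemma two_sets {A B : Set Pt} (hA : Convex ℝ A) (hB : Convex ℝ B) (hAc : IsClosed A)
    (hi : (interior A).Nonempty) (hd : ∀ x ∈ interior A, x ∉ B) {p : Pt}
    (hpB : p ∈ B) (hn : A ∪ B ∈ 𝓝 p) : p ∉ extremePoints ℝ A := by
  intro hpe
  obtain ⟨f, s, hf1, hf2⟩ := geometric_hahn_banach_open hA.interior isOpen_interior hB
    (Set.disjoint_left.2 hd)
  have hps : s ≤ f p := hf2 p hpB
  have hcl : A ⊆ closure (interior A) := by
    rw [hA.closure_interior_eq_closure_of_nonempty_interior hi]; exact subset_closure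
  have hps' : f p ≤ s := by
    have : closure (interior A) ⊆ {x | f x ≤ s} :=
      closure_minimal (fun x hx => (hf1 x hx).le) (isClosed_le f.continuous continuous_const)
    exact this (hcl hpe.1)
  obtain ⟨x0, hx0⟩ := hi
  have hv : f (x0 - p) < 0 := by
    have := hf1 x0 hx0
    rw [map_sub]; linarith
  obtain ⟨w, hw, hw0⟩ : ∃ w, f w = 0 ∧ w ≠ 0 := by
    have : LinearMap.ker (f : Pt →ₗ[ℝ] ℝ) ≠ ⊥ :=
      LinearMap.ker_ne_bot_of_finrank_lt (by simp)
    obtain ⟨w, hw, hw0⟩ := Submodule.exists_mem_ne_zero_of_ne_bot this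
    exact ⟨w, by simpa using hw, hw0⟩
  set v := x0 - p with hvdef
  have hcont : ∀ w' : Pt, f w' = 0 → ∀ᶠ e in 𝓝 (0:ℝ), p + e • w' ∈ A := by
    intro w' hw'
    have hc : ContinuousAt (fun q : ℝ × ℝ => p + q.1 • w' + q.2 • v) (0, 0) := by fun_prop
    have h1 : ∀ᶠ q in 𝓝 ((0:ℝ), (0:ℝ)), p + q.1 • w' + q.2 • v ∈ A ∪ B := by
      have h0 : A ∪ B ∈ 𝓝 (p + (0 : ℝ) • w' + (0 : ℝ) • v) := by simpa using hn
      exact hc.eventually h0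
    rw [nhds_prod_eq] at h1
    filter_upwards [h1.curry] with e he
    apply hAc.closure_eq ▸ (mem_closure_of_tendsto (b := 𝓝[>] (0:ℝ))
      (f := fun d : ℝ => p + e • w' + d • v) ?_ ?_ : p + e • w' ∈ closure A)
    · have : Continuous (fun d : ℝ => p + e • w' + d • v) := by fun_prop
      have h2 := this.tendsto 0
      simp only [zero_smul, add_zero] at h2
      exact h2.mono_left nhdsWithin_le_nhds
    · filter_upwards [he.filter_mono nhdsWithin_le_nhds, self_mem_nhdsWithin] with d hd1 hd0
      refine hd1.resolve_right fun hb => ?_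
      have h3 := hf2 _ hb
      simp only [map_add, map_smul, hw', smul_eq_mul, mul_zero, add_zero] at h3
      have : d * f v < 0 := mul_neg_of_pos_of_neg hd0 hv
      linarith
  have h1 := (hcont w hw).and (hcont (-w) (by simp [hw]))
  obtain ⟨e, ⟨he1, he2⟩, he0⟩ :=
    ((h1.filter_mono nhdsWithin_le_nhds).and (self_mem_nhdsWithin : Ioi (0:ℝ) ∈ 𝓝[>] 0)).exists
  have := hpe.2 he1 he2 ⟨1/2, 1/2, by norm_num, by norm_num, by norm_num, by module⟩
  have h4 : e • w = 0 := by simpa using this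
  rcases smul_eq_zero.1 h4 with h | h
  · rw [h] at he0; exact lt_irrefl _ he0
  · exact hw0 h

lemma ext_of_local {A H : Set Pt} (hH : Convex ℝ H) {p : Pt} (hAH : A ⊆ H)
    (hp : p ∈ extremePoints ℝ A) (hloc : ∀ᶠ x in 𝓝 p, x ∈ H → x ∈ A) :
    p ∈ extremePoints ℝ H := by
  refine ⟨hAH hp.1, ?_⟩
  intro a ha b hb ⟨α, β, hα, hβ, hαβ, hpab⟩
  have key : ∀ c : Pt, c ∈ H → ∀ᶠ e in 𝓝[>] (0:ℝ), p + e • (c - p) ∈ A := by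
    intro c hc
    have hct : Tendsto (fun e : ℝ => p + e • (c - p)) (𝓝[>] 0) (𝓝 p) := by
      have : Continuous (fun e : ℝ => p + e • (c - p)) := by fun_prop
      have h2 := this.tendsto 0
      simp only [zero_smul, add_zero] at h2
      exact h2.mono_left nhdsWithin_le_nhds
    have h1 : ∀ᶠ e in 𝓝[>] (0:ℝ), e < 1 :=
      (eventually_lt_nhds one_pos).filter_mono nhdsWithin_le_nhds
    filter_upwards [hct.eventually hloc, h1, self_mem_nhdsWithin] with e he he1 he0
    exact he (hH.add_smul_sub_mem (hAH hp.1) hc ⟨le_of_lt he0, he1.le⟩)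
  obtain ⟨e, ⟨h1, h2⟩, he0⟩ := (((key a ha).and (key b hb)).and self_mem_nhdsWithin).exists
  have h3 := hp.2 h1 h2 ⟨α, β, hα, hβ, hαβ, by
    have e1 : α = 1 - β := by linarith
    have : (1 - β) • a + β • b - p = 0 := by rw [← e1, hpab]; simp
    calc α • (p + e • (a - p)) + β • (p + e • (b - p))
        = p + e • ((1 - β) • a + β • b - p) := by rw [e1]; module
      _ = p := by rw [this]; simp⟩
  have h4 : e • (a - p) = 0 := by simpa using h3
  rcases smul_eq_zero.1 h4 with h | h
  · rw [h] at he0; exact absurd he0 (lt_irrefl _)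
  · exact sub_eq_zero.1 h

/-- There is a direction functional which is injective on a given finite set. -/
lemma exists_dir (V : Set Pt) (hV : V.Finite) :
    ∃ (f : Pt →L[ℝ] ℝ) (u : Pt), Dir f u ∧ Set.InjOn f V := by
  have hbad : ((fun q : Pt × Pt => -(q.1 0 - q.2 0) / (q.1 1 - q.2 1)) '' (V ×ˢ V)).Finite :=
    (hV.prod hV).image _
  obtain ⟨s, hs⟩ := hbad.exists_notMem
  let f : Pt →L[ℝ] ℝ := EuclideanSpace.proj 0 + s • EuclideanSpace.proj 1
  have hf : ∀ x : Pt, f x = x 0 + s * x 1 := fun x => by simp [f]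
  refine ⟨f, !₂[-s, 1], ⟨?_, ?_, ?_⟩, ?_⟩
  · intro h
    have h1 := hf !₂[1, 0]
    rw [h] at h1
    simp at h1
  · rw [hf]; simp
  · intro x hx
    rw [hf] at hx
    refine ⟨x 1, ?_⟩
    ext i
    fin_cases i
    · simp; linarith
    · simp
  · intro x hx y hy hxy
    rw [hf, hf] at hxy
    by_cases h1 : x 1 = y 1
    · ext i
      fin_cases i
      · simp only [h1] at hxy; simpa using hxy
      · simpa using h1
    · exfalso
      apply hs
      refine ⟨(x, y), ⟨hx, hy⟩, ?_⟩
      have : x 1 - y 1 ≠ 0 := sub_ne_zero.2 h1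
      simp only
      rw [div_eq_iff this]
      linarith

lemma same_side {N : ℕ} {P : Fin N → Set Pt} (hcv : ∀ n, Convex ℝ (P n))
    (hdisj : ∀ n m, n ≠ m → interior (P n) ∩ interior (P m) = ∅) {p u : Pt} {n m : Fin N}
    (hpn : p ∈ P n) (hpm : p ∈ P m) {s t : ℝ} (hs : p + s • u ∈ interior (P n))
    (ht : p + t • u ∈ P m) (hi : (interior (P m)).Nonempty) (hst : 0 < s * t) : n = m := by
  by_contra hnm
  obtain ⟨x, hx, hx'⟩ := same_ray (hcv n) (hcv m) hpn hpm hs ht hst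
  exact interior_inter_empty (hcv m) hi (hdisj n m hnm) hx hx'

lemma ne_zero_of_ext {A : Set Pt} {p u : Pt} (hp : p ∈ extremePoints ℝ A) {t : ℝ}
    (ht : p + t • u ∈ interior A) : t ≠ 0 := by
  rintro rfl
  exact ext_notMem_interior hp (by simpa using ht)

lemma mem_openSegment_opp {p u : Pt} {s t : ℝ} (h : s * t < 0) :
    p ∈ openSegment ℝ (p + s • u) (p + t • u) := by
  have hst : s - t ≠ 0 := by
    intro h0
    have : s = t := by linarith
    rw [this] at h
    nlinarith [mul_self_nonneg t]
  have h2 : 0 < (s - t) * (s - t) := mul_self_pos.2 hst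
  refine ⟨-t / (s - t), s / (s - t), ?_, ?_, ?_, ?_⟩
  · have : -t / (s - t) = (t * t - s * t) / ((s - t) * (s - t)) := by field_simp; ring
    rw [this]; exact div_pos (by nlinarith [mul_self_nonneg t]) h2
  · have : s / (s - t) = (s * s - s * t) / ((s - t) * (s - t)) := by field_simp
    rw [this]; exact div_pos (by nlinarith [mul_self_nonneg s]) h2
  · field_simp; ring
  · have e : -t / (s - t) = 1 - s / (s - t) := by field_simp; ring
    have e2 : (1 - s / (s - t)) * s + (s / (s - t)) * t = 0 := by field_simp; ring
    rw [e]
    calc _ = p + ((1 - s / (s - t)) * s + (s / (s - t)) * t) • u := by module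
      _ = p := by rw [e2]; simp

lemma local_contra {f : Pt →L[ℝ] ℝ} {u : Pt} (hD : Dir f u) {Hex : Set Pt} (hH : Convex ℝ Hex)
    {N : ℕ} {P : Fin N → Set Pt}
    (hcl : ∀ n, IsClosed (P n)) (hcv : ∀ n, Convex ℝ (P n))
    (hne : ∀ n, P n = ∅ ∨ (interior (P n)).Nonempty)
    (hunion : (⋃ n, P n) = Hex)
    (hdisj : ∀ n m, n ≠ m → interior (P n) ∩ interior (P m) = ∅) {p : Pt}
    (hp : p ∉ extremePoints ℝ Hex) (n₀ : Fin N) (hn₀ : p ∈ extremePoints ℝ (P n₀))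
    (hall : ∀ n, p ∈ extremePoints ℝ (P n) → ∃ t : ℝ, p + t • u ∈ interior (P n)) : False := by
  have hsub : ∀ n, P n ⊆ Hex := fun n => hunion ▸ subset_iUnion P n
  have hint : ∀ n, p ∈ P n → (interior (P n)).Nonempty := by
    intro n hn
    rcases hne n with h | h
    · rw [h] at hn; exact absurd hn (notMem_empty p)
    · exact h
  obtain ⟨t₀, ht₀⟩ := hall n₀ hn₀
  have ht₀0 := ne_zero_of_ext hn₀ ht₀
  have key : ∀ n, n ≠ n₀ → p ∈ P n → ∃ t : ℝ, p + t • u ∈ interior (P n) ∧ t₀ * t < 0 := by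
    intro n hn hpn
    have h1 : ∃ t : ℝ, p + t • u ∈ interior (P n) := by
      by_cases hpe : p ∈ extremePoints ℝ (P n)
      · exact hall n hpe
      rcases nonext_dir hD (P n) (hcv n) (hint n hpn) hpn hpe with h | ⟨s, t, hs, ht, hs', ht'⟩
      · exact h
      · exfalso
        rcases lt_or_gt_of_ne ht₀0 with h0 | h0
        · exact hn (same_side hcv hdisj hn₀.1 hpn ht₀ ht' (hint n hpn)
            (mul_pos_of_neg_of_neg h0 ht)).symm
        · exact hn (same_side hcv hdisj hn₀.1 hpn ht₀ hs' (hint n hpn) (mul_pos h0 hs)).symm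
    obtain ⟨t, ht⟩ := h1
    refine ⟨t, ht, ?_⟩
    rcases lt_trichotomy (t₀ * t) 0 with h | h | h
    · exact h
    · exfalso
      have ht0 : t = 0 := (mul_eq_zero.1 h).resolve_left ht₀0
      rw [ht0, zero_smul, add_zero] at ht
      exact interior_inter_empty (hcv n₀) (hint n₀ hn₀.1) (hdisj n n₀ hn) ht hn₀.1
    · exact absurd (same_side hcv hdisj hn₀.1 hpn ht₀ (interior_subset ht) (hint n hpn) h).symm hn
  -- near `p`, only the pieces containing `p` matter
  have hloc : ∀ᶠ x in 𝓝 p, x ∈ Hex → ∃ n, p ∈ P n ∧ x ∈ P n := by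
    have h1 : ∀ᶠ x in 𝓝 p, ∀ n, p ∉ P n → x ∉ P n := by
      rw [eventually_all]
      intro n
      by_cases h : p ∈ P n
      · simp [h]
      · filter_upwards [(hcl n).isOpen_compl.mem_nhds h] with x hx _ using hx
    filter_upwards [h1] with x hx hxH
    rw [← hunion, mem_iUnion] at hxH
    obtain ⟨n, hn⟩ := hxH
    refine ⟨n, ?_, hn⟩
    by_contra h
    exact hx n h hn
  by_cases hother : ∃ n₁, n₁ ≠ n₀ ∧ p ∈ P n₁
  · obtain ⟨n₁, hn₁, hpn₁⟩ := hother
    obtain ⟨t₁, ht₁, hneg₁⟩ := key n₁ hn₁ hpn₁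
    have honly : ∀ n, p ∈ P n → n = n₀ ∨ n = n₁ := by
      intro n hpn
      by_cases hn : n = n₀
      · exact Or.inl hn
      right
      obtain ⟨t, ht, hneg⟩ := key n hn hpn
      refine same_side hcv hdisj hpn hpn₁ ht (interior_subset ht₁) (hint n₁ hpn₁) ?_
      have h3 := mul_pos_of_neg_of_neg hneg hneg₁
      have h4 : 0 < t₀ * t₀ := mul_self_pos.2 ht₀0
      by_contra! h5
      nlinarith
    have hpin : p ∈ interior Hex :=
      hH.interior.openSegment_subset (interior_mono (hsub n₀) ht₀)
        (interior_mono (hsub n₁) ht₁) (mem_openSegment_opp hneg₁)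
    refine two_sets (hcv n₀) (hcv n₁) (hcl n₀) (hint n₀ hn₀.1) ?_ hpn₁ ?_ hn₀
    · intro x hx hx'
      exact interior_inter_empty (hcv n₁) (hint n₁ hpn₁) (hdisj n₀ n₁ hn₁.symm) hx hx'
    · filter_upwards [hloc, mem_interior_iff_mem_nhds.1 hpin] with x hx hxH
      obtain ⟨n, hpn, hxn⟩ := hx hxH
      rcases honly n hpn with rfl | rfl
      · exact Or.inl hxn
      · exact Or.inr hxn
  · push Not at hother
    apply hp
    refine ext_of_local hH (hsub n₀) hn₀ ?_
    filter_upwards [hloc] with x hx hxH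
    obtain ⟨n, hpn, hxn⟩ := hx hxH
    by_cases hn : n = n₀
    · rwa [hn] at hxn
    · exact absurd hpn (hother n hn)

open Classical in
/-- Number of pieces having `p` as a vertex. -/
def kk {N : ℕ} (P : Fin N → Set Pt) (p : Pt) : ℕ :=
  (Finset.univ.filter fun n => p ∈ extremePoints ℝ (P n)).card

open Classical in
/-- Number of pieces having `p` as a vertex that is not extremal across direction `u`. -/
def cc {N : ℕ} (P : Fin N → Set Pt) (u p : Pt) : ℕ :=
  (Finset.univ.filter fun n => p ∈ extremePoints ℝ (P n) ∧
    ∃ t : ℝ, p + t • u ∈ interior (P n)).card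

lemma cc_le_two {N : ℕ} {P : Fin N → Set Pt} (hcv : ∀ n, Convex ℝ (P n))
    (hdisj : ∀ n m, n ≠ m → interior (P n) ∩ interior (P m) = ∅) (u p : Pt) :
    cc P u p ≤ 2 := by
  classical
  unfold cc
  have hex : ∀ n : Fin N, ∃ t : ℝ, (∃ t : ℝ, p + t • u ∈ interior (P n)) →
      p + t • u ∈ interior (P n) := by
    intro n
    by_cases h : ∃ t : ℝ, p + t • u ∈ interior (P n)
    · obtain ⟨t, ht⟩ := h; exact ⟨t, fun _ => ht⟩
    · exact ⟨0, fun h' => absurd h' h⟩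
  choose t ht using hex
  have := Finset.card_le_card_of_injOn (s := Finset.univ.filter fun n =>
    p ∈ extremePoints ℝ (P n) ∧ ∃ t : ℝ, p + t • u ∈ interior (P n))
    (t := (Finset.univ : Finset Bool)) (fun n => decide (0 < t n)) (fun _ _ => Finset.mem_coe.2 (Finset.mem_univ _)) (by
      intro n hn m hm hnm
      simp only [Finset.coe_filter, Finset.mem_univ, true_and, mem_ofPred_eq] at hn hm
      have h1 := ht n hn.2
      have h2 := ht m hm.2
      have hn0 := ne_zero_of_ext hn.1 h1
      have hm0 := ne_zero_of_ext hm.1 h2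
      refine same_side hcv hdisj hn.1.1 hm.1.1 h1 (interior_subset h2) ⟨_, h2⟩ ?_
      simp only [decide_eq_decide] at hnm
      rcases lt_or_gt_of_ne hn0 with h | h
      · have : ¬ 0 < t m := fun h' => absurd (hnm.2 h') (not_lt.2 h.le)
        exact mul_pos_of_neg_of_neg h (lt_of_le_of_ne (not_lt.1 this) hm0)
      · exact mul_pos h (hnm.1 h))
  simpa using this

lemma cc_le_one {N : ℕ} {P : Fin N → Set Pt} {Hex : Set Pt} (hcv : ∀ n, Convex ℝ (P n))
    (hunion : (⋃ n, P n) = Hex)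
    (hdisj : ∀ n m, n ≠ m → interior (P n) ∩ interior (P m) = ∅) (u p : Pt)
    (hp : p ∈ extremePoints ℝ Hex) :
    cc P u p ≤ 1 := by
  classical
  have hsub : ∀ n, P n ⊆ Hex := fun n => hunion ▸ subset_iUnion P n
  unfold cc
  rw [Finset.card_le_one]
  intro n hn m hm
  simp only [Finset.mem_filter, Finset.mem_univ, true_and] at hn hm
  obtain ⟨hn, s, hs⟩ := hn
  obtain ⟨hm, t, ht⟩ := hm
  have hs0 := ne_zero_of_ext hn hs
  have ht0 := ne_zero_of_ext hm ht
  rcases lt_or_gt_of_ne (mul_ne_zero hs0 ht0) with h | h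
  · exfalso
    have := hp.2 (hsub n (interior_subset hs)) (hsub m (interior_subset ht))
      (mem_openSegment_opp h)
    rw [this] at hs
    exact ext_notMem_interior hn hs
  · exact same_side hcv hdisj hn.1 hm.1 hs (interior_subset ht) ⟨_, ht⟩ h

lemma cc_eq_zero {f : Pt →L[ℝ] ℝ} {u : Pt} (hD : Dir f u) {N : ℕ} {P : Fin N → Set Pt}
    {Hex : Set Pt} (hunion : (⋃ n, P n) = Hex) (g : Pt →L[ℝ] ℝ) (hg : g = f ∨ g = -f) (p : Pt)
    (hp : ∀ x ∈ Hex, g x ≤ g p) :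
    cc P u p = 0 := by
  classical
  have hsub : ∀ n, P n ⊆ Hex := fun n => hunion ▸ subset_iUnion P n
  have hg0 : g ≠ 0 := by
    rcases hg with rfl | rfl
    · exact hD.1
    · exact neg_ne_zero.2 hD.1
  have hgu : g u = 0 := by
    rcases hg with rfl | rfl
    · exact hD.2.1
    · simp [hD.2.1]
  unfold cc
  rw [Finset.card_eq_zero, Finset.filter_eq_empty_iff]
  rintro n - ⟨-, t, ht⟩
  have := interior_lt Hex g hg0 (g p) hp _ (interior_mono (hsub n) ht)
  simp [hgu] at this

lemma one_le_kk {N : ℕ} {P : Fin N → Set Pt} {Hex : Set Pt}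
    (hunion : (⋃ n, P n) = Hex) (p : Pt) (hp : p ∈ extremePoints ℝ Hex) :
    ∃ n, p ∈ extremePoints ℝ (P n) := by
  have hsub : ∀ n, P n ⊆ Hex := fun n => hunion ▸ subset_iUnion P n
  have h := hp.1
  rw [← hunion, mem_iUnion] at h
  obtain ⟨n, hn⟩ := h
  exact ⟨n, inter_extremePoints_subset_extremePoints_of_subset (hsub n) ⟨hn, hp⟩⟩

lemma three_cc_le {f : Pt →L[ℝ] ℝ} {u : Pt} (hD : Dir f u) {Hex : Set Pt} (hH : Convex ℝ Hex)
    {N : ℕ} {P : Fin N → Set Pt}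
    (hcl : ∀ n, IsClosed (P n)) (hcv : ∀ n, Convex ℝ (P n))
    (hne : ∀ n, P n = ∅ ∨ (interior (P n)).Nonempty)
    (hunion : (⋃ n, P n) = Hex)
    (hdisj : ∀ n m, n ≠ m → interior (P n) ∩ interior (P m) = ∅) {p : Pt}
    (hp : p ∉ extremePoints ℝ Hex) : 3 * cc P u p ≤ 2 * kk P p := by
  classical
  have h2 := cc_le_two hcv hdisj u p
  have hs : (Finset.univ.filter fun n => p ∈ extremePoints ℝ (P n) ∧
      ∃ t : ℝ, p + t • u ∈ interior (P n)) ⊆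
      Finset.univ.filter fun n => p ∈ extremePoints ℝ (P n) := by
    intro n hn
    simp only [Finset.mem_filter, Finset.mem_univ, true_and] at hn ⊢
    exact hn.1
  have hle : cc P u p ≤ kk P p := Finset.card_le_card hs
  have hne' : cc P u p = kk P p → cc P u p = 0 := by
    intro heq
    by_contra h0
    have hpos : 0 < kk P p := by omega
    obtain ⟨n₀, hn₀⟩ := Finset.card_pos.1 hpos
    have he := Finset.eq_of_subset_of_card_le hs heq.ge
    refine local_contra hD hH hcl hcv hne hunion hdisj hp n₀ (by simpa using hn₀) ?_
    intro n hn
    have : n ∈ Finset.univ.filter fun n => p ∈ extremePoints ℝ (P n) := by simpa using hn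
    rw [← he] at this
    simp only [Finset.mem_filter, Finset.mem_univ, true_and] at this
    exact this.2
  omega

/-- If convex polytopes `P 1, …, P N`, each empty or with nonempty interior, tile a convex
hexagon with pairwise disjoint interiors, then the average number of their vertices is at
most 6. -/
theorem sum_vertices_le_six (Hex : Set Pt) (hHex : IsConvexHexagon Hex)
    (N : ℕ) (P : Fin N → Set Pt)
    (hpoly : ∀ n, ∃ G : Finset Pt, P n = convexHull ℝ (G : Set Pt))
    (hne : ∀ n, P n = ∅ ∨ (interior (P n)).Nonempty)
    (hunion : (⋃ n, P n) = Hex)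
    (hdisj : ∀ n m, n ≠ m → interior (P n) ∩ interior (P m) = ∅) :
    ∑ n : Fin N, (Set.extremePoints ℝ (P n)).ncard ≤ 6 * N := by
  classical
  obtain ⟨hHc, hHv, hHi, hH6⟩ := hHex
  have hcv : ∀ n, Convex ℝ (P n) := by
    intro n; obtain ⟨G, hG⟩ := hpoly n; rw [hG]; exact convex_convexHull ℝ _
  have hcp : ∀ n, IsCompact (P n) := by
    intro n; obtain ⟨G, hG⟩ := hpoly n; rw [hG]; exact G.finite_toSet.isCompact_convexHull ℝ
  have hfin : ∀ n, (extremePoints ℝ (P n)).Finite := by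
    intro n; obtain ⟨G, hG⟩ := hpoly n; rw [hG]
    exact G.finite_toSet.subset extremePoints_convexHull_subset
  have hVfin : (⋃ n, extremePoints ℝ (P n)).Finite := Set.finite_iUnion hfin
  obtain ⟨f, u, hD, hinj⟩ := exists_dir _ hVfin
  set V : Finset Pt := hVfin.toFinset with hV
  have hmemV : ∀ p, p ∈ V ↔ ∃ n, p ∈ extremePoints ℝ (P n) := by
    intro p; simp [hV]
  have hXfin : (extremePoints ℝ Hex).Finite := Set.finite_of_ncard_ne_zero (by omega)
  set X : Finset Pt := hXfin.toFinset with hX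
  have hmemX : ∀ p, p ∈ X ↔ p ∈ extremePoints ℝ Hex := by
    intro p; simp [hX]
  have hX6 : X.card = 6 := by rw [← hH6, Set.ncard_eq_toFinset_card _ hXfin]
  have hXV : X ⊆ V := fun p hp => (hmemV p).2 (one_le_kk hunion p ((hmemX p).1 hp))
  -- double counting
  have hk : ∑ n : Fin N, (extremePoints ℝ (P n)).ncard = ∑ p ∈ V, kk P p := by
    have h1 : ∀ n, (extremePoints ℝ (P n)).ncard =
        (V.filter fun p => p ∈ extremePoints ℝ (P n)).card := by
      intro n
      rw [← Set.ncard_coe_finset]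
      congr 1
      ext p
      simp only [Finset.coe_filter, mem_ofPred_eq, hmemV]
      exact ⟨fun h => ⟨⟨n, h⟩, h⟩, fun h => h.2⟩
    simp only [h1]
    exact Finset.sum_card_bipartiteAbove_eq_sum_card_bipartiteBelow
      (fun (n : Fin N) p => p ∈ extremePoints ℝ (P n))
  have hc : ∑ n : Fin N,
      {p | p ∈ extremePoints ℝ (P n) ∧ ∃ t : ℝ, p + t • u ∈ interior (P n)}.ncard
      = ∑ p ∈ V, cc P u p := by
    have h1 : ∀ n, {p | p ∈ extremePoints ℝ (P n) ∧ ∃ t : ℝ, p + t • u ∈ interior (P n)}.ncard =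
        (V.filter fun p => p ∈ extremePoints ℝ (P n) ∧
          ∃ t : ℝ, p + t • u ∈ interior (P n)).card := by
      intro n
      rw [← Set.ncard_coe_finset]
      congr 1
      ext p
      simp only [Finset.coe_filter, mem_ofPred_eq, hmemV]
      exact ⟨fun h => ⟨⟨n, h.1⟩, h⟩, fun h => h.2⟩
    simp only [h1]
    exact Finset.sum_card_bipartiteAbove_eq_sum_card_bipartiteBelow
      (fun (n : Fin N) p => p ∈ extremePoints ℝ (P n) ∧ ∃ t : ℝ, p + t • u ∈ interior (P n))
  have hkc : ∑ n : Fin N, (extremePoints ℝ (P n)).ncard ≤ ∑ p ∈ V, cc P u p + 2 * N := by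
    rw [← hc]
    calc _ ≤ ∑ n : Fin N,
        ({p | p ∈ extremePoints ℝ (P n) ∧ ∃ t : ℝ, p + t • u ∈ interior (P n)}.ncard + 2) := by
          refine Finset.sum_le_sum fun n _ => ?_
          rcases hne n with h | h
          · simp [h]
          · exact ncard_ext_le hD (P n) (hcp n) (hcv n) h
              (hinj.mono (Set.subset_iUnion (fun n => extremePoints ℝ (P n)) n)) (hfin n)
      _ = _ := by rw [Finset.sum_add_distrib]; simp [mul_comm]
  -- vertices of the hexagon
  have hXk : 6 ≤ ∑ p ∈ X, kk P p := by
    rw [← hX6, Finset.card_eq_sum_ones]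
    refine Finset.sum_le_sum fun p hp => ?_
    obtain ⟨n, hn⟩ := one_le_kk hunion p ((hmemX p).1 hp)
    exact Finset.card_pos.2 ⟨n, by simpa using hn⟩
  have hXc : ∑ p ∈ X, cc P u p ≤ 4 := by
    have hHne := hHi.mono interior_subset
    obtain ⟨M, hM, hM'⟩ := exists_max_ext Hex hHc hHne f
    obtain ⟨m, hm, hm'⟩ := exists_max_ext Hex hHc hHne (-f)
    have hMm : M ≠ m := by
      rintro rfl
      obtain ⟨x, hx⟩ := hHi
      have h1 := interior_lt Hex f hD.1 _ hM' x hx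
      have h2 := hm' x (interior_subset hx)
      simp only [neg_apply] at h2
      linarith
    have hM0 := cc_eq_zero (P := P) hD hunion f (Or.inl rfl) M hM'
    have hm0 := cc_eq_zero (P := P) hD hunion (-f) (Or.inr rfl) m hm'
    have hsub : ({M, m} : Finset Pt) ⊆ X := by
      intro p hp
      simp only [Finset.mem_insert, Finset.mem_singleton] at hp
      rcases hp with rfl | rfl
      · exact (hmemX _).2 hM
      · exact (hmemX _).2 hm
    rw [← Finset.sum_sdiff hsub, Finset.sum_pair hMm, hM0, hm0]
    have hcard : (X \ {M, m}).card = 4 := by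
      rw [Finset.card_sdiff_of_subset hsub, hX6, Finset.card_pair hMm]
    calc _ ≤ ∑ p ∈ X \ {M, m}, 1 := by
          simp only [add_zero]
          refine Finset.sum_le_sum fun p hp => ?_
          exact cc_le_one hcv hunion hdisj u p ((hmemX p).1 (Finset.mem_sdiff.1 hp).1)
      _ = 4 := by rw [← Finset.card_eq_sum_ones, hcard]
      _ ≤ 4 := le_rfl
  have hrest : 3 * ∑ p ∈ V \ X, cc P u p ≤ 2 * ∑ p ∈ V \ X, kk P p := by
    rw [Finset.mul_sum, Finset.mul_sum]
    refine Finset.sum_le_sum fun p hp => ?_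
    exact three_cc_le hD hHv (fun n => (hcp n).isClosed) hcv hne hunion hdisj
      (fun h => (Finset.mem_sdiff.1 hp).2 ((hmemX p).2 h))
  have e1 := Finset.sum_sdiff (f := fun p => cc P u p) hXV
  have e2 := Finset.sum_sdiff (f := fun p => kk P p) hXV
  omega
end
end
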